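/- For every nonzero integer n there exist a group H and an injective group homomorphism BS(1,n) → H such that: H is metabelian (its commutator subgroup is abelian), and H satisfies a quadratic isoperimetric inequality, i.e. there exist a finite generating set S of H, a finite set R of null-homotopic words over S, and a constant C such that every null-homotopic word w ∈ F(S) equals, in F(S), a product of at most C·|w|² + C conjugates of elements of R ∪ R⁻¹. -/

import Mathlib

namespace DehnCT

variable {G : Type*} [Group G] (S : Set G)

/-- The canonical homomorphism `π : F(S) → G` from the free group on `S`. -/
noncomputable def pi : FreeGroup S →* G := FreeGroup.lift Subtype.val

/-- The reduced word length of an element of the free group. -/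
noncomputable def len (w : FreeGroup S) : ℕ :=
  letI := Classical.decEq S
  w.norm

end DehnCT

open DehnCT

/-- The single relator `t x t⁻¹ x⁻ⁿ` of `BS(1,n)`, on the generators
`true ↦ t`, `false ↦ x`. -/
def BSrel (n : ℤ) : Set (FreeGroup Bool) :=
  {FreeGroup.of true * FreeGroup.of false * (FreeGroup.of true)⁻¹ *
    (FreeGroup.of false) ^ (-n)}

/-- The solvable Baumslag–Solitar group `BS(1,n) = ⟨t, x | t x t⁻¹ = xⁿ⟩`. -/
def BS (n : ℤ) : Type := PresentedGroup (BSrel n)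

instance (n : ℤ) : Group (BS n) := by unfold BS; infer_instance

/-!
`BS(1,n)` acts on `ℤ[1/n]` by affine maps, `x` translating by `1` and `t` multiplying by `n`. No
element of `ℤ[1/n] ⋊ ℤ` contracts both the real and the `n`-adic unit ball, so more scalings are
needed. Put `N = 2n`, `M = N² + 1` and `A = ℤ[1/(MN)]`, and let `H = A ⋊ Q`, where `Q = ℤ³` acts
through multiplication by `N`, `M` and `n`; since `Q` is abelian, `H` is metabelian. In `H` each of
the real ball, the ball at the primes dividing `N` and the ball at the primes dividing `M` is
contracted by some element of `Q`, and any two of them are contracted by a common element.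

Because of this, in `A³ ⋊ Q`, with one coordinate for each ball, every word of length `l` has a
normal form: a product of three unit translations, one in each coordinate, conjugated by words in
`Q` of length `O(l)`, followed by a word in `Q` of length `O(l)`. Two such normal forms
merge into one of twice the length at quadratic cost: rescaling uses only the
contraction of one ball, and commuting translations of different coordinates uses the common
contraction. Summing the cost over a binary subdivision of a null-homotopic word gives a geometric
series dominated by its last term, which is quadratic in the length.

Finally `A` is cocompact and discrete in the product of the three completions. Rounding `A³` to its
diagonal copy of `A` is therefore a retraction of `A³ ⋊ Q` onto `H` with finitely many displacements
along edges, and pushing a filling in `A³ ⋊ Q` through it gives a filling in `H` of the same size up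
to a linear term.
-/

section Area

variable {F : Type*} [Group F] {R : Set F} {k l c : ℕ} {u v w u' v' w' : F}

/-- The area of `w` over the relators `R` is at most `k`: in the ambient group `F`, typically free,
`w` is a product of at most `k` conjugates of elements of `R ∪ R⁻¹`. -/
def AreaLE (R : Set F) (k : ℕ) (w : F) : Prop :=
  ∃ L : List (F × F), L.length ≤ k ∧ (∀ p ∈ L, p.2 ∈ R ∨ p.2⁻¹ ∈ R) ∧
    w = (L.map fun p => p.1 * p.2 * p.1⁻¹).prod

namespace AreaLE

theorem one (R : Set F) (k : ℕ) : AreaLE R k 1 :=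
  ⟨[], by simp⟩

theorem of_mem (h : w ∈ R) : AreaLE R 1 w :=
  ⟨[(1, w)], by simp [h]⟩

theorem mono (h : AreaLE R k w) (hkl : k ≤ l) : AreaLE R l w :=
  let ⟨L, hL, hR, hw⟩ := h
  ⟨L, hL.trans hkl, hR, hw⟩

theorem mono_set {R' : Set F} (h : AreaLE R k w) (hR : R ⊆ R') : AreaLE R' k w :=
  let ⟨L, hL, hmem, hw⟩ := h
  ⟨L, hL, fun p hp => (hmem p hp).imp (@hR _) (@hR _), hw⟩

theorem mul (h : AreaLE R k w) (h' : AreaLE R l w') : AreaLE R (k + l) (w * w') := by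
  obtain ⟨L, hL, hR, rfl⟩ := h
  obtain ⟨L', hL', hR', rfl⟩ := h'
  refine ⟨L ++ L', ?_, fun p hp => ?_, by simp⟩
  · simpa using Nat.add_le_add hL hL'
  · exact (List.mem_append.mp hp).elim (hR p) (hR' p)

theorem conj (h : AreaLE R k w) (u : F) : AreaLE R k (u * w * u⁻¹) := by
  obtain ⟨L, hL, hR, rfl⟩ := h
  refine ⟨L.map fun p => (u * p.1, p.2), by simpa using hL, ?_, ?_⟩
  · rw [List.forall_mem_map]
    exact hR
  · rw [← MulAut.conj_apply, map_list_prod]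
    simp [Function.comp_def, mul_assoc]

theorem inv (h : AreaLE R k w) : AreaLE R k w⁻¹ := by
  obtain ⟨L, hL, hR, rfl⟩ := h
  refine ⟨(L.map fun p => (p.1, p.2⁻¹)).reverse, by simpa using hL, ?_, ?_⟩
  · simpa only [List.mem_reverse, List.forall_mem_map, inv_inv, or_comm] using hR
  · simp [List.prod_inv_reverse, Function.comp_def, mul_assoc]

end AreaLE

/-- `w` and `w'` differ by a null-homotopic element of area at most `k` over the relators `R`. -/
def HomotopicIn (R : Set F) (k : ℕ) (w w' : F) : Prop :=
  AreaLE R k (w * w'⁻¹)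

theorem homotopicIn_one_iff : HomotopicIn R k w 1 ↔ AreaLE R k w := by
  simp [HomotopicIn]

namespace HomotopicIn

theorem refl (R : Set F) (k : ℕ) (w : F) : HomotopicIn R k w w := by
  simpa [HomotopicIn] using AreaLE.one R k

theorem of_eq (h : w = w') : HomotopicIn R 0 w w' :=
  h ▸ refl R 0 w

theorem mono (h : HomotopicIn R k w w') (hkl : k ≤ l) : HomotopicIn R l w w' :=
  AreaLE.mono h hkl

theorem mono_set {R' : Set F} (h : HomotopicIn R k w w') (hR : R ⊆ R') : HomotopicIn R' k w w' :=
  AreaLE.mono_set h hR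

theorem symm (h : HomotopicIn R k w w') : HomotopicIn R k w' w := by
  simpa [HomotopicIn] using AreaLE.inv h

theorem trans (h : HomotopicIn R k u v) (h' : HomotopicIn R l v w) :
    HomotopicIn R (k + l) u w := by
  simpa [HomotopicIn] using AreaLE.mul h h'

instance : Trans (HomotopicIn R k) (HomotopicIn R l) (HomotopicIn R (k + l)) :=
  ⟨trans⟩

theorem mul_left (u : F) (h : HomotopicIn R k w w') : HomotopicIn R k (u * w) (u * w') := by
  simpa [HomotopicIn, mul_assoc] using AreaLE.conj h u

theorem mul_right (h : HomotopicIn R k w w') (u : F) : HomotopicIn R k (w * u) (w' * u) := by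
  simpa [HomotopicIn] using h

theorem mul (h : HomotopicIn R k u u') (h' : HomotopicIn R l v v') :
    HomotopicIn R (k + l) (u * v) (u' * v') :=
  (h.mul_right v).trans (h'.mul_left u')

theorem conj (u : F) (h : HomotopicIn R k w w') :
    HomotopicIn R k (u * w * u⁻¹) (u * w' * u⁻¹) :=
  (h.mul_left u).mul_right u⁻¹

theorem inv (h : HomotopicIn R k w w') : HomotopicIn R k w⁻¹ w'⁻¹ := by
  simpa [mul_assoc] using (h.symm.mul_right w⁻¹).mul_left w'⁻¹

section Lists

variable {ι : Type*} {A B : ι → F} {s : List ι}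

theorem list_prod (h : ∀ i ∈ s, HomotopicIn R c (A i) (B i)) :
    HomotopicIn R (s.length * c) (s.map A).prod (s.map B).prod := by
  induction s with
  | nil => exact refl R _ 1
  | cons i s ih =>
    rw [List.forall_mem_cons] at h
    simpa [Nat.succ_mul, Nat.add_comm] using h.1.mul (ih h.2)

theorem list_prod_commute (h : ∀ i ∈ s, HomotopicIn R c (A i * w) (w * A i)) :
    HomotopicIn R (s.length * c) ((s.map A).prod * w) (w * (s.map A).prod) := by
  have h' : ∀ i ∈ s, HomotopicIn R c (A i) (w * A i * w⁻¹) := fun i hi => by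
    simpa using (h i hi).mul_right w⁻¹
  have conj_prod : (s.map fun i => w * A i * w⁻¹).prod = w * (s.map A).prod * w⁻¹ := by
    simpa [Function.comp_def] using (map_list_prod (MulAut.conj w) (s.map A)).symm
  simpa [conj_prod] using (list_prod h').mul_right w

theorem list_prod_mul (h : s.Pairwise fun i j => HomotopicIn R c (A j * B i) (B i * A j)) :
    HomotopicIn R (s.length ^ 2 * c) ((s.map A).prod * (s.map B).prod)
      (s.map fun i => A i * B i).prod := by
  induction s with
  | nil => simpa using refl R _ (1 : F)
  | cons i s ih =>
    obtain ⟨hi, hs⟩ := List.pairwise_cons.mp h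
    simp only [List.map_cons, List.prod_cons]
    refine mono (k := s.length * c + s.length ^ 2 * c) ?_ ?_
    · calc
        HomotopicIn R (s.length * c) (A i * (s.map A).prod * (B i * (s.map B).prod))
            (A i * B i * ((s.map A).prod * (s.map B).prod)) := by
          simpa [mul_assoc] using
            ((list_prod_commute hi).mul_right (s.map B).prod).mul_left (A i)
        HomotopicIn R (s.length ^ 2 * c) _ (A i * B i * (s.map fun i => A i * B i).prod) :=
          (ih hs).mul_left _
    · rw [← add_mul, List.length_cons]
      gcongr
      lia

end Lists

end HomotopicIn

end Area

section ShortRelators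

variable {α G : Type*} [Group G] [DecidableEq α] {f : FreeGroup α →* G} {r k : ℕ}
  {w w' : FreeGroup α}

/-- The null-homotopic words of length at most `r`, for the generating family given by `f`. -/
def shortRelators (f : FreeGroup α →* G) (r : ℕ) : Set (FreeGroup α) :=
  {w | f w = 1 ∧ w.norm ≤ r}

theorem shortRelators_finite [Finite α] (f : FreeGroup α →* G) (r : ℕ) :
    (shortRelators f r).Finite :=
  ((List.finite_length_le (α × Bool) r).preimage FreeGroup.toWord_injective.injOn).subset
    fun _ hw => hw.2

theorem shortRelators_mono (f : FreeGroup α →* G) {r' : ℕ} (h : r ≤ r') :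
    shortRelators f r ⊆ shortRelators f r' :=
  fun _ hw => ⟨hw.1, hw.2.trans h⟩

theorem HomotopicIn.of_norm_add_norm_le (h : f w = f w') (hr : w.norm + w'.norm ≤ r) :
    HomotopicIn (shortRelators f r) 1 w w' :=
  AreaLE.of_mem ⟨by simp [h], (FreeGroup.norm_mul_le w w'⁻¹).trans (by simpa using hr)⟩

end ShortRelators

theorem HomotopicIn.map_eq {F G : Type*} [Group F] [Group G] {f : F →* G} {R : Set F} {k : ℕ}
    {w w' : F} (hR : ∀ r ∈ R, f r = 1) (h : HomotopicIn R k w w') : f w = f w' := by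
  obtain ⟨L, -, hL, hw⟩ := h
  rw [← mul_inv_eq_one, ← map_inv, ← map_mul, hw, map_list_prod]
  refine List.prod_eq_one ?_
  simp only [List.mem_map, forall_exists_index, and_imp, forall_apply_eq_imp_iff₂]
  intro p hp
  have : f p.2 = 1 := (hL p hp).elim (hR _) fun h => by simpa using hR _ h
  simp [this]

section ExponentSum

variable {β : Type*} [DecidableEq β]

/-- The exponent sum of the letter `b`, as a character of the free abelian group on `β`. -/
def exponentSum (b : β) : Abelianization (FreeGroup β) →* Multiplicative ℤ :=
  Abelianization.lift (FreeGroup.lift (Pi.mulSingle b (Multiplicative.ofAdd 1)))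

theorem exponentSum_of_mk (b : β) (L : List (β × Bool)) :
    (exponentSum b (Abelianization.of (FreeGroup.mk L))).toAdd =
      L.count (b, true) - L.count (b, false) := by
  induction L with
  | nil => simp [exponentSum]
  | cons a L ih =>
    obtain ⟨a, ε⟩ := a
    simp only [exponentSum, Abelianization.lift_apply_of, FreeGroup.lift_mk] at ih ⊢
    rw [List.map_cons, List.prod_cons, toAdd_mul, ih]
    obtain rfl | hab := eq_or_ne a b <;> cases ε <;> simp [*] <;> ring

theorem count_true_eq_count_false {L : List (β × Bool)}
    (h : Abelianization.of (FreeGroup.mk L) = 1) (b : β) :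
    L.count (b, true) = L.count (b, false) := by
  have := exponentSum_of_mk b L
  simp only [h, map_one, toAdd_one] at this
  lia

end ExponentSum

section FreeAbelian

variable {F β : Type*} [Group F] {R : Set F} {θ : FreeGroup β →* F} [DecidableEq β]

theorem HomotopicIn.mk_mul_comm
    (hθ : ∀ x y : FreeGroup β, x.norm ≤ 1 → y.norm ≤ 1 → HomotopicIn R 1 (θ (x * y)) (θ (y * x)))
    {x : FreeGroup β} (hx : x.norm ≤ 1) (L : List (β × Bool)) :
    HomotopicIn R L.length (θ (FreeGroup.mk L * x)) (θ (x * FreeGroup.mk L)) := by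
  induction L with
  | nil => exact .of_eq (by simp [← FreeGroup.one_eq_mk])
  | cons a L ih =>
    have head : HomotopicIn R 1 (θ (FreeGroup.mk [a] * x)) (θ (x * FreeGroup.mk [a])) :=
      hθ _ _ FreeGroup.norm_mk_le hx
    have split : FreeGroup.mk (a :: L) = FreeGroup.mk [a] * FreeGroup.mk L :=
      (FreeGroup.mul_mk (L₁ := [a])).symm
    simp only [split, map_mul, mul_assoc] at ih head ⊢
    exact (ih.mul_left (θ (FreeGroup.mk [a]))).trans
      (by simpa only [mul_assoc] using head.mul_right (θ (FreeGroup.mk L)))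

theorem AreaLE.map_mk_of_count_eq
    (hθ : ∀ x y : FreeGroup β, x.norm ≤ 1 → y.norm ≤ 1 → HomotopicIn R 1 (θ (x * y)) (θ (y * x)))
    (L : List (β × Bool)) (hL : ∀ b, L.count (b, true) = L.count (b, false)) :
    AreaLE R (L.length ^ 2) (θ (FreeGroup.mk L)) := by
  match L with
  | [] => simpa [← FreeGroup.one_eq_mk] using AreaLE.one R 0
  | (b, ε) :: L =>
    have mem : (b, !ε) ∈ L := by
      have := hL b
      refine List.count_pos_iff.mp ?_
      cases ε <;> simp [-List.count_pos_iff] at this ⊢ <;> lia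
    obtain ⟨L₁, L₂, rfl⟩ := List.append_of_mem mem
    have rest : AreaLE R ((L₁ ++ L₂).length ^ 2) (θ (FreeGroup.mk (L₁ ++ L₂))) := by
      refine map_mk_of_count_eq hθ (L₁ ++ L₂) fun b' => ?_
      have := hL b'
      cases ε <;> simp [List.count_cons] at this ⊢ <;> lia
    set x := FreeGroup.mk [(b, ε)] with hx
    have x_inv : FreeGroup.mk [(b, !ε)] = x⁻¹ := by simp [hx, FreeGroup.inv_mk, FreeGroup.invRev]
    have norm_x : x.norm ≤ 1 := FreeGroup.norm_mk_le
    have split : FreeGroup.mk ((b, ε) :: (L₁ ++ (b, !ε) :: L₂)) =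
        x * (FreeGroup.mk L₁ * x⁻¹) * FreeGroup.mk L₂ := by
      rw [← x_inv, hx]
      simp only [FreeGroup.mul_mk, List.append_assoc, List.cons_append, List.nil_append]
    have cancel : HomotopicIn R L₁.length (θ (x * (FreeGroup.mk L₁ * x⁻¹) * FreeGroup.mk L₂))
        (θ (FreeGroup.mk (L₁ ++ L₂))) := by
      have := HomotopicIn.mk_mul_comm hθ (x := x⁻¹) (by simpa using norm_x) L₁
      simpa [← FreeGroup.mul_mk] using (this.mul_left (θ x)).mul_right (θ (FreeGroup.mk L₂))
    rw [split, ← homotopicIn_one_iff]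
    refine (cancel.trans (homotopicIn_one_iff.mpr rest)).mono ?_
    simp only [List.length_cons, List.length_append]
    lia
termination_by L.length

theorem HomotopicIn.map_of_abelianization_eq
    (hθ : ∀ x y : FreeGroup β, x.norm ≤ 1 → y.norm ≤ 1 → HomotopicIn R 1 (θ (x * y)) (θ (y * x)))
    {u u' : FreeGroup β} (h : Abelianization.of u = Abelianization.of u') :
    HomotopicIn R ((u.norm + u'.norm) ^ 2) (θ u) (θ u') := by
  set L := u.toWord ++ u'⁻¹.toWord with hL
  have mk_eq : FreeGroup.mk L = u * u'⁻¹ := by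
    simp only [hL, ← FreeGroup.mul_mk, FreeGroup.mk_toWord]
  have length_eq : L.length = u.norm + u'.norm := by
    rw [hL, List.length_append, ← FreeGroup.norm, ← FreeGroup.norm, FreeGroup.norm_inv_eq]
  rw [← length_eq, HomotopicIn, ← map_inv, ← map_mul, ← mk_eq]
  exact .map_mk_of_count_eq hθ L (count_true_eq_count_false (by simp [mk_eq, h]))

end FreeAbelian

section Contraction

variable {ι F β : Type*} [Group F] {R T : Set F} {θ : FreeGroup β →* F} {k l m : ℕ} {g g' κ : F}

/-- Conjugation by `g` maps `T` into itself, at the cost of area `k`: the words of a contracting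
element shrink a unit ball of the normal subgroup that it acts on. -/
def Contracts (R T : Set F) (k : ℕ) (g : F) : Prop :=
  ∀ κ ∈ T, ∃ κ' ∈ T, HomotopicIn R k (g * κ * g⁻¹) κ'

namespace Contracts

theorem one (R T : Set F) : Contracts R T 0 1 :=
  fun κ hκ => ⟨κ, hκ, .of_eq (by simp)⟩

theorem mul (h : Contracts R T k g) (h' : Contracts R T l g') :
    Contracts R T (l + k) (g * g') := by
  intro κ hκ
  obtain ⟨κ', hκ', e'⟩ := h' κ hκ
  obtain ⟨κ'', hκ'', e''⟩ := h κ' hκ'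
  exact ⟨κ'', hκ'', by simpa [mul_assoc] using (e'.conj g).trans e''⟩

theorem pow (h : Contracts R T k g) (l : ℕ) : Contracts R T (l * k) (g ^ l) := by
  induction l with
  | zero => simpa using one R T
  | succ l ih => simpa [pow_succ, Nat.succ_mul, Nat.add_comm] using ih.mul h

theorem exists_conj_of_abelianization_eq [DecidableEq β]
    (hθ : ∀ x y : FreeGroup β, x.norm ≤ 1 → y.norm ≤ 1 → HomotopicIn R 1 (θ (x * y)) (θ (y * x)))
    {u v y : FreeGroup β} (huv : Abelianization.of u = Abelianization.of (v * y))
    (hm : u.norm + v.norm + y.norm ≤ m) (hy : Contracts R T k (θ y)) (hκ : κ ∈ T) :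
    ∃ κ' ∈ T, HomotopicIn R (2 * m ^ 2 + k) (θ u * κ * (θ u)⁻¹) (θ v * κ' * (θ v)⁻¹) := by
  obtain ⟨κ', hκ', contract⟩ := hy κ hκ
  have change : HomotopicIn R (m ^ 2) (θ u) (θ v * θ y) := by
    rw [← map_mul]
    refine (HomotopicIn.map_of_abelianization_eq hθ huv).mono (Nat.pow_le_pow_left ?_ 2)
    have := FreeGroup.norm_mul_le v y
    lia
  refine ⟨κ', hκ', HomotopicIn.mono (k := m ^ 2 + m ^ 2 + k) ?_ (by lia)⟩
  exact ((change.mul_right κ).mul change.inv).trans (by simpa [mul_assoc] using contract.conj (θ v))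

end Contracts

/-- The element `κ`, of a unit ball contracted by `q⁻¹`, scaled to the ball of radius `q ^ l`. -/
def atLevel (θ : FreeGroup β →* F) (q : FreeGroup β) (l : ℕ) (κ : F) : F :=
  θ (q ^ l) * κ * (θ (q ^ l))⁻¹

/-- The product over `i` in `s` of the elements `κ i`, scaled to level `l`, followed by the word
`u`. -/
def normalWord (θ : FreeGroup β →* F) (q : ι → FreeGroup β) (s : List ι) (l : ℕ) (κ : ι → F)
    (u : FreeGroup β) : F :=
  (s.map fun i => atLevel θ (q i) l (κ i)).prod * θ u

theorem normalWord_mul_normalWord (θ : FreeGroup β →* F) (q : ι → FreeGroup β)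
    (s : List ι) (l : ℕ) (κ κ' : ι → F) (u u' : FreeGroup β) :
    normalWord θ q s l κ u * normalWord θ q s l κ' u' =
      (s.map fun i => atLevel θ (q i) l (κ i)).prod *
        (s.map fun i => θ u * atLevel θ (q i) l (κ' i) * (θ u)⁻¹).prod * θ (u * u') := by
  have conj_prod : (s.map fun i => θ u * atLevel θ (q i) l (κ' i) * (θ u)⁻¹).prod =
      θ u * (s.map fun i => atLevel θ (q i) l (κ' i)).prod * (θ u)⁻¹ := by
    simpa [Function.comp_def] using
      (map_list_prod (MulAut.conj (θ u)) (s.map fun i => atLevel θ (q i) l (κ' i))).symm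
  rw [conj_prod]
  simp [normalWord, mul_assoc]

end Contraction

theorem exists_eq_mul_of_norm_le_succ {β : Type*} [DecidableEq β] {u : FreeGroup β} {l : ℕ}
    (hu : u.norm ≤ l + 1) :
    ∃ x v : FreeGroup β, x.norm ≤ 1 ∧ v.norm ≤ l ∧ u = x * v := by
  refine ⟨FreeGroup.mk (u.toWord.take 1), FreeGroup.mk (u.toWord.drop 1),
    FreeGroup.norm_mk_le.trans (by simp), FreeGroup.norm_mk_le.trans ?_, ?_⟩
  · rw [FreeGroup.norm] at hu
    simpa using hu
  · rw [FreeGroup.mul_mk, List.take_append_drop, FreeGroup.mk_toWord]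

theorem freeGroup_norm_pow_le {β : Type*} [DecidableEq β] (u : FreeGroup β) (l : ℕ) :
    (u ^ l).norm ≤ l * u.norm := by
  induction l with
  | zero => simp
  | succ l ih =>
    rw [pow_succ, Nat.succ_mul]
    exact (FreeGroup.norm_mul_le _ _).trans (Nat.add_le_add_right ih _)

theorem merge_cost_le (m c l : ℕ) :
    m * (2 * ((4 * c + 2) * l) ^ 2 + l) + m * (2 * ((4 * c + 2) * l) ^ 2 + l) +
      m ^ 2 * (128 * (c * (2 * l)) ^ 2 + 4 * (2 * l) + 1) + m * 1 ≤
        600 * (m + 1) ^ 2 * (c + 1) ^ 2 * (l + 1) ^ 2 := by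
  set E := (c + 1) * (l + 1) with hE
  have one_le : 1 ≤ E := Nat.mul_pos c.succ_pos l.succ_pos
  have le_sq : E ≤ E ^ 2 := Nat.le_self_pow two_ne_zero E
  have : l ≤ E := by nlinarith
  have scale_le : 2 * ((4 * c + 2) * l) ^ 2 + l ≤ 33 * E ^ 2 := by
    have := Nat.pow_le_pow_left (by nlinarith : (4 * c + 2) * l ≤ 4 * E) 2
    lia
  have comm_le : 128 * (c * (2 * l)) ^ 2 + 4 * (2 * l) + 1 ≤ 521 * E ^ 2 := by
    have := Nat.pow_le_pow_left (by nlinarith : c * (2 * l) ≤ 2 * E) 2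
    lia
  calc
    _ ≤ m * (33 * E ^ 2) + m * (33 * E ^ 2) + m ^ 2 * (521 * E ^ 2) + m * E ^ 2 := by
      gcongr
      lia
    _ ≤ 600 * (m + 1) ^ 2 * E ^ 2 := by nlinarith [Nat.zero_le (m * E ^ 2), Nat.zero_le (E ^ 2)]
    _ = _ := by rw [hE]; ring

section ContractingSystem

variable {ι β F : Type*} [Group F] [DecidableEq β]

/-- Subsets `T i` of `F`, playing the role of unit balls, on which the free group on `β` acts by
conjugation through `θ` in such a way that each ball is contracted by `x * (q i)⁻¹` for every letter
`x`, and that two distinct balls are contracted simultaneously relative to a common word `p`. All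
relations have area one over `R` and the words `q i` and `p` have length at most `c`. -/
structure IsContractingSystem (R : Set F) (θ : FreeGroup β →* F) (T : ι → Set F)
    (q : ι → FreeGroup β) (c : ℕ) : Prop where
  letter_comm : ∀ x y, x.norm ≤ 1 → y.norm ≤ 1 → HomotopicIn R 1 (θ (x * y)) (θ (y * x))
  norm_le : ∀ i, (q i).norm ≤ c
  contracts : ∀ i x, x.norm ≤ 1 → Contracts R (T i) 1 (θ (x * (q i)⁻¹))
  mul_mem : ∀ i, ∀ κ ∈ T i, ∀ κ' ∈ T i,
    ∃ κ'' ∈ T i, HomotopicIn R 1 (κ * κ') (θ (q i) * κ'' * (θ (q i))⁻¹)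
  comm_of_ne : ∀ i j, i ≠ j → ∀ κ ∈ T i, ∀ κ' ∈ T j, HomotopicIn R 1 (κ * κ') (κ' * κ)
  exists_common : ∀ i j, i ≠ j → ∃ p : FreeGroup β, p.norm ≤ c ∧
    Contracts R (T i) 1 (θ (q i * p⁻¹)) ∧ Contracts R (T j) 1 (θ (q j * p⁻¹))

/-- Up to area `a`, the element `w` is a normal word at level `l`, ending in a word of length at
most `l`. -/
def HasNormalForm (R : Set F) (θ : FreeGroup β →* F) (T : ι → Set F) (q : ι → FreeGroup β)
    (s : List ι) (l a : ℕ) (w : F) : Prop :=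
  ∃ κ u, (∀ i, κ i ∈ T i) ∧ u.norm ≤ l ∧ HomotopicIn R a w (normalWord θ q s l κ u)

namespace IsContractingSystem

variable {R : Set F} {θ : FreeGroup β →* F} {T : ι → Set F} {q : ι → FreeGroup β} {c l a : ℕ}
  {i j : ι} {κ κ' w w' : F} {s : List ι}

theorem exists_contracts (h : IsContractingSystem R θ T q c) (i : ι) {u : FreeGroup β}
    (hu : u.norm ≤ l) :
    ∃ y : FreeGroup β, y.norm ≤ (c + 1) * l ∧ Contracts R (T i) l (θ y) ∧
      Abelianization.of u = Abelianization.of (q i ^ l * y) := by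
  induction l generalizing u with
  | zero =>
    obtain rfl : u = 1 := FreeGroup.norm_eq_zero.mp (Nat.le_zero.mp hu)
    exact ⟨1, by simp, by simpa using Contracts.one R (T i), by simp⟩
  | succ l ih =>
    obtain ⟨x, v, hx, hv, rfl⟩ := exists_eq_mul_of_norm_le_succ hu
    obtain ⟨y, hy, contracts_y, hvy⟩ := ih hv
    refine ⟨x * (q i)⁻¹ * y, ?_, ?_, ?_⟩
    · have : (x * (q i)⁻¹).norm ≤ 1 + c :=
        (FreeGroup.norm_mul_le _ _).trans (by simpa using Nat.add_le_add hx (h.norm_le i))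
      exact (FreeGroup.norm_mul_le _ _).trans (by lia)
    · simpa using (h.contracts i x hx).mul contracts_y
    · simp only [map_mul, hvy, map_pow, map_inv, pow_succ]
      rw [mul_assoc _ (Abelianization.of (q i)), ← mul_assoc (Abelianization.of (q i)),
        ← mul_assoc (Abelianization.of (q i)), mul_inv_cancel_comm, mul_left_comm]

theorem exists_conj_atLevel (h : IsContractingSystem R θ T q c) {u : FreeGroup β}
    (hu : u.norm ≤ l) (hκ : κ ∈ T i) :
    ∃ κ' ∈ T i, HomotopicIn R (2 * ((4 * c + 2) * l) ^ 2 + l)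
      (θ u * atLevel θ (q i) l κ * (θ u)⁻¹) (atLevel θ (q i) (2 * l) κ') := by
  obtain ⟨y, hy, contracts_y, huy⟩ := h.exists_contracts i hu
  have ab : Abelianization.of (u * q i ^ l) = Abelianization.of (q i ^ (2 * l) * y) := by
    simp only [map_mul, huy, two_mul, pow_add]
    exact mul_right_comm _ _ _
  have norm_le : (u * q i ^ l).norm + (q i ^ (2 * l)).norm + y.norm ≤ (4 * c + 2) * l := by
    have hq := Nat.mul_le_mul_left l (h.norm_le i)
    have := FreeGroup.norm_mul_le u (q i ^ l)
    have := freeGroup_norm_pow_le (q i) l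
    have := freeGroup_norm_pow_le (q i) (2 * l)
    lia
  simpa [atLevel, mul_assoc] using
    contracts_y.exists_conj_of_abelianization_eq h.letter_comm ab norm_le hκ

theorem exists_atLevel_two_mul (h : IsContractingSystem R θ T q c) (l : ℕ) (hκ : κ ∈ T i) :
    ∃ κ' ∈ T i, HomotopicIn R (2 * ((4 * c + 2) * l) ^ 2 + l)
      (atLevel θ (q i) l κ) (atLevel θ (q i) (2 * l) κ') := by
  simpa using h.exists_conj_atLevel (u := 1) (by simp) hκ

theorem atLevel_comm (h : IsContractingSystem R θ T q c) (hij : i ≠ j) (l : ℕ) (hκ : κ ∈ T i)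
    (hκ' : κ' ∈ T j) :
    HomotopicIn R (128 * (c * l) ^ 2 + 4 * l + 1)
      (atLevel θ (q i) l κ * atLevel θ (q j) l κ')
      (atLevel θ (q j) l κ' * atLevel θ (q i) l κ) := by
  obtain ⟨p, hp, contracts_i, contracts_j⟩ := h.exists_common i j hij
  have replace {i κ} (hi : Contracts R (T i) 1 (θ (q i * p⁻¹))) (hκ : κ ∈ T i) :
      ∃ κ' ∈ T i, HomotopicIn R (2 * (4 * c * l) ^ 2 + l * 1)
        (atLevel θ (q i) l κ) (θ (p ^ l) * κ' * (θ (p ^ l))⁻¹) := by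
    refine Contracts.exists_conj_of_abelianization_eq h.letter_comm
      (y := (q i * p⁻¹) ^ l) ?_ ?_ (by simpa using hi.pow l) hκ
    · simp [← mul_pow]
    · have : (q i * p⁻¹).norm ≤ c + c := (FreeGroup.norm_mul_le _ _).trans
        (Nat.add_le_add (h.norm_le i) (by simpa using hp))
      have := freeGroup_norm_pow_le (q i) l
      have := freeGroup_norm_pow_le p l
      have := freeGroup_norm_pow_le (q i * p⁻¹) l
      have := h.norm_le i
      nlinarith
  obtain ⟨κ₁, hκ₁, e⟩ := replace contracts_i hκ
  obtain ⟨κ₁', hκ₁', e'⟩ := replace contracts_j hκ'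
  have comm := (h.comm_of_ne i j hij κ₁ hκ₁ κ₁' hκ₁').conj (θ (p ^ l))
  have comm' : HomotopicIn R 1
      (θ (p ^ l) * κ₁ * (θ (p ^ l))⁻¹ * (θ (p ^ l) * κ₁' * (θ (p ^ l))⁻¹))
      (θ (p ^ l) * κ₁' * (θ (p ^ l))⁻¹ * (θ (p ^ l) * κ₁ * (θ (p ^ l))⁻¹)) := by
    simpa [mul_assoc] using comm
  exact (((e.mul e').trans comm').trans (e'.symm.mul e.symm)).mono (by lia)

theorem exists_atLevel_succ (h : IsContractingSystem R θ T q c) (l : ℕ) (hκ : κ ∈ T i)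
    (hκ' : κ' ∈ T i) :
    ∃ κ'' ∈ T i, HomotopicIn R 1 (atLevel θ (q i) l κ * atLevel θ (q i) l κ')
      (atLevel θ (q i) (l + 1) κ'') := by
  obtain ⟨κ'', hκ'', e⟩ := h.mul_mem i κ hκ κ' hκ'
  exact ⟨κ'', hκ'', by simpa [atLevel, pow_succ, mul_assoc] using e.conj (θ (q i ^ l))⟩

theorem hasNormalForm_mul (h : IsContractingSystem R θ T q c) (hs : s.Nodup)
    (hw : HasNormalForm R θ T q s l a w) (hw' : HasNormalForm R θ T q s l a w') :
    HasNormalForm R θ T q s (2 * l + 1)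
      (2 * a + 600 * (s.length + 1) ^ 2 * (c + 1) ^ 2 * (l + 1) ^ 2) (w * w') := by
  obtain ⟨κ, u, hκ, hu, e⟩ := hw
  obtain ⟨κ', u', hκ', hu', e'⟩ := hw'
  choose κ₁ hκ₁ raise using fun i => h.exists_atLevel_two_mul l (hκ i)
  choose κ₂ hκ₂ raise' using fun i => h.exists_conj_atLevel hu (hκ' i)
  choose κ₃ hκ₃ merge using fun i => h.exists_atLevel_succ (2 * l) (hκ₁ i) (hκ₂ i)
  refine ⟨κ₃, u * u', hκ₃, (FreeGroup.norm_mul_le u u').trans (by lia), ?_⟩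
  have to_level_two_mul := (HomotopicIn.list_prod fun i (_ : i ∈ s) => raise i).mul
    (HomotopicIn.list_prod fun i (_ : i ∈ s) => raise' i)
  have interleave := HomotopicIn.list_prod_mul <| hs.imp fun {i j} hij =>
    h.atLevel_comm hij.symm (2 * l) (hκ₁ j) (hκ₂ i)
  have to_level_succ := HomotopicIn.list_prod fun i (_ : i ∈ s) => merge i
  have total := (e.mul e').trans <| normalWord_mul_normalWord θ q s l κ κ' u u' ▸
    ((to_level_two_mul.trans interleave).trans to_level_succ).mul_right (θ (u * u'))
  exact total.mono (by linarith [merge_cost_le s.length c l])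

theorem hasNormalForm_list_prod (h : IsContractingSystem R θ T q c) (hs : s.Nodup)
    (h_one : HasNormalForm R θ T q s 1 a 1) (k : ℕ) (L : List F) (hk : L.length ≤ 2 ^ k)
    (hL : ∀ w ∈ L, HasNormalForm R θ T q s 1 a w) :
    HasNormalForm R θ T q s (2 ^ (k + 1) - 1)
      ((1200 * (s.length + 1) ^ 2 * (c + 1) ^ 2 + a) * 4 ^ k) L.prod := by
  induction k generalizing L with
  | zero =>
    have of_one {w} (hw : HasNormalForm R θ T q s 1 a w) : HasNormalForm R θ T q s 1
        ((1200 * (s.length + 1) ^ 2 * (c + 1) ^ 2 + a) * 4 ^ 0) w :=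
      let ⟨κ, u, hκ, hu, e⟩ := hw
      ⟨κ, u, hκ, hu, e.mono (by simp)⟩
    match L, hk with
    | [], _ => exact of_one h_one
    | [w], _ => simpa using of_one (hL w (by simp))
  | succ k ih =>
    have half := ih (L.take (2 ^ k)) (by simp) fun w hw => hL w (List.mem_of_mem_take hw)
    have half' := ih (L.drop (2 ^ k)) (by rw [List.length_drop]; lia)
      fun w hw => hL w (List.mem_of_mem_drop hw)
    obtain ⟨κ, u, hκ, hu, e⟩ := h.hasNormalForm_mul hs half half'
    rw [List.prod_take_mul_prod_drop] at e
    have level : 2 * (2 ^ (k + 1) - 1) + 1 = 2 ^ (k + 1 + 1) - 1 := by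
      have := Nat.one_le_two_pow (n := k + 1)
      rw [pow_succ]
      lia
    rw [level] at hu e
    refine ⟨κ, u, hκ, hu, e.mono ?_⟩
    have sq_level : (2 ^ (k + 1) - 1 + 1) ^ 2 = 4 * 4 ^ k := by
      rw [Nat.sub_add_cancel Nat.one_le_two_pow, ← pow_mul, mul_comm, pow_mul, pow_succ']
      norm_num
    rw [sq_level, pow_succ 4 k]
    nlinarith [Nat.zero_le (a * 4 ^ k)]

theorem areaLE_list_prod {G : Type*} [Group G] {f : F →* G} (h : IsContractingSystem R θ T q c)
    (hs : s.Nodup) (h_one : HasNormalForm R θ T q s 1 a 1) (hR : ∀ r ∈ R, f r = 1)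
    (hf : ∀ l κ u, (∀ i, κ i ∈ T i) → f (normalWord θ q s l κ u) = 1 →
      (∀ i, HomotopicIn R 1 (κ i) 1) ∧ Abelianization.of u = 1)
    {L : List F} (hL : ∀ w ∈ L, HasNormalForm R θ T q s 1 a w) (hfL : f L.prod = 1) :
    AreaLE R (4 * (1200 * (s.length + 1) ^ 2 * (c + 1) ^ 2 + a + s.length + 4) *
      (L.length + 1) ^ 2) L.prod := by
  set k := Nat.log 2 L.length + 1 with hk
  have length_le : L.length ≤ 2 ^ k := (Nat.lt_pow_succ_log_self one_lt_two _).le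
  have two_pow_le : 2 ^ k ≤ 2 * (L.length + 1) := by
    rw [hk, pow_succ']
    exact Nat.mul_le_mul_left 2 (Nat.pow_log_le_add_one 2 _)
  obtain ⟨κ, u, hκ, hu, e⟩ := h.hasNormalForm_list_prod hs h_one k L length_le hL
  obtain ⟨κ_null, u_eq⟩ := hf _ κ u hκ (by rw [← e.map_eq hR, hfL])
  have levels_null (i) : HomotopicIn R 1 (atLevel θ (q i) (2 ^ (k + 1) - 1) (κ i)) 1 := by
    simpa only [atLevel, mul_one, mul_inv_cancel] using
      (κ_null i).conj (θ (q i ^ (2 ^ (k + 1) - 1)))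
  have u_null : HomotopicIn R (u.norm ^ 2) (θ u) 1 := by
    simpa using HomotopicIn.map_of_abelianization_eq h.letter_comm (u' := 1) (by simpa using u_eq)
  have null := e.trans <|
    (HomotopicIn.list_prod (B := fun _ => 1) fun i (_ : i ∈ s) => levels_null i).mul u_null
  refine (homotopicIn_one_iff.mp (by simpa using null)).mono ?_
  have four_pow : (2 ^ k) ^ 2 = 4 ^ k := by rw [← pow_mul, mul_comm, pow_mul]; norm_num
  have four_pow_le : 4 ^ k ≤ 4 * (L.length + 1) ^ 2 := by
    rw [← four_pow]
    exact (Nat.pow_le_pow_left two_pow_le 2).trans_eq (by ring)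
  have u_norm_sq : u.norm ^ 2 ≤ 4 * 4 ^ k := by
    rw [← four_pow]
    exact (Nat.pow_le_pow_left (hu.trans (Nat.sub_le _ 1)) 2).trans_eq (by ring)
  calc
    _ ≤ (1200 * (s.length + 1) ^ 2 * (c + 1) ^ 2 + a + s.length + 4) * 4 ^ k := by
      nlinarith [Nat.one_le_pow k 4 four_pos]
    _ ≤ _ := (Nat.mul_le_mul_left _ four_pow_le).trans_eq (by ring)

end IsContractingSystem

end ContractingSystem

section Transfer

open RegularWreathProduct

variable {α γ G H : Type*} [Group G] [Group H]

/-- The word traced by a map from `G` to the group generated by `γ`: if `σ x a` spells the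
displacement of the map along the edge from `x` labelled `a`, then the left component of the image
of `w` at `x⁻¹` spells the displacement along the path from `x` labelled `w`. -/
def traceHom (f : FreeGroup α →* G) (σ : G → α → FreeGroup γ) :
    FreeGroup α →* FreeGroup γ ≀ᵣ G :=
  FreeGroup.lift fun a => ⟨fun x => σ x⁻¹ a, f (.of a)⟩

variable {f : FreeGroup α →* G} {σ : G → α → FreeGroup γ} {p : FreeGroup γ →* H} {φ : G → H}
  {N J r k : ℕ}

@[simp]
theorem traceHom_right (f : FreeGroup α →* G) (σ : G → α → FreeGroup γ) (w : FreeGroup α) :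
    (traceHom f σ w).right = f w := by
  have : rightHom.comp (traceHom f σ) = f :=
    FreeGroup.ext_hom _ _ fun a => by simp [traceHom]
  exact DFunLike.congr_fun this w

theorem traceHom_mul_left (f : FreeGroup α →* G) (σ : G → α → FreeGroup γ) (w w' : FreeGroup α)
    (x : G) : (traceHom f σ (w * w')).left x =
      (traceHom f σ w).left x * (traceHom f σ w').left ((f w)⁻¹ * x) := by
  simp

theorem map_traceHom_left (hσ : ∀ x a, p (σ x a) = (φ x)⁻¹ * φ (x * f (.of a)))
    (w : FreeGroup α) (x : G) :
    p ((traceHom f σ w).left x) = (φ x⁻¹)⁻¹ * φ (x⁻¹ * f w) := by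
  induction w using FreeGroup.induction_on generalizing x with
  | C1 => simp
  | of a => simp [traceHom, hσ]
  | inv_of a ih => simp [ih]
  | mul w w' ih ih' => simp [ih, ih', mul_assoc]

theorem exists_displacement_words [DecidableEq γ] (hp : Function.Surjective p)
    (hfin : {d | ∃ x a, d = (φ x)⁻¹ * φ (x * f (.of a))}.Finite) :
    ∃ (σ : G → α → FreeGroup γ) (N : ℕ),
      (∀ x a, p (σ x a) = (φ x)⁻¹ * φ (x * f (.of a))) ∧ ∀ x a, (σ x a).norm ≤ N := by
  choose word hword using hp
  obtain ⟨N, hN⟩ := (hfin.image fun d => (word d).norm).bddAbove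
  exact ⟨fun x a => word ((φ x)⁻¹ * φ (x * f (.of a))), N, fun x a => hword _,
    fun x a => hN ⟨_, ⟨x, a, rfl⟩, rfl⟩⟩

variable [DecidableEq α] [DecidableEq γ]

theorem norm_traceHom_left_le (hN : ∀ x a, (σ x a).norm ≤ N) (w : FreeGroup α) (x : G) :
    ((traceHom f σ w).left x).norm ≤ N * w.norm := by
  have letter (a : α) (ε : Bool) (x : G) :
      ((traceHom f σ (FreeGroup.mk [(a, ε)])).left x).norm ≤ N := by
    cases ε <;> simp [traceHom, hN]
  have (L : List (α × Bool)) :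
      ((traceHom f σ (FreeGroup.mk L)).left x).norm ≤ N * L.length := by
    induction L generalizing x with
    | nil => simp [← FreeGroup.one_eq_mk]
    | cons a L ih =>
      rw [← List.singleton_append, ← FreeGroup.mul_mk, traceHom_mul_left]
      refine (FreeGroup.norm_mul_le _ _).trans ?_
      rw [List.singleton_append, List.length_cons, Nat.mul_succ, Nat.add_comm]
      exact Nat.add_le_add (ih _) (letter a.1 a.2 x)
  simpa only [FreeGroup.mk_toWord, FreeGroup.norm] using this w.toWord

theorem AreaLE.traceHom_left (hσ : ∀ x a, p (σ x a) = (φ x)⁻¹ * φ (x * f (.of a)))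
    (hN : ∀ x a, (σ x a).norm ≤ N) {w : FreeGroup α} (h : AreaLE (shortRelators f r) k w) (x : G) :
    AreaLE (shortRelators p (N * r)) k ((traceHom f σ w).left x) := by
  have relator {v : FreeGroup α} (hv : v ∈ shortRelators f r) (x : G) :
      (traceHom f σ v).left x ∈ shortRelators p (N * r) :=
    ⟨by simp [map_traceHom_left hσ, hv.1],
      (norm_traceHom_left_le hN v x).trans (Nat.mul_le_mul_left N hv.2)⟩
  have conj (u : FreeGroup α) {v : FreeGroup α} (hv : v ∈ shortRelators f r) (x : G) :
      AreaLE (shortRelators p (N * r)) 1 ((traceHom f σ (u * v * u⁻¹)).left x) := by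
    simpa [hv.1] using (AreaLE.of_mem (relator hv ((f u)⁻¹ * x))).conj ((traceHom f σ u).left x)
  have inv_mem {v : FreeGroup α} (hv : v⁻¹ ∈ shortRelators f r) : v ∈ shortRelators f r := by
    simpa [shortRelators] using hv
  obtain ⟨L, hk, hL, rfl⟩ := h
  refine AreaLE.mono ?_ hk
  clear hk
  induction L generalizing x with
  | nil => simpa using AreaLE.one _ 0
  | cons v L ih =>
    rw [List.forall_mem_cons] at hL
    rw [List.map_cons, List.prod_cons, traceHom_mul_left, List.length_cons, Nat.add_comm]
    exact (conj v.1 (hL.1.elim id inv_mem) x).mul (ih _ hL.2)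

theorem homotopicIn_traceHom_left {ι : H →* G} {j : FreeGroup γ →* FreeGroup α}
    (hσ : ∀ x a, p (σ x a) = (φ x)⁻¹ * φ (x * f (.of a)))
    (hN : ∀ x a, (σ x a).norm ≤ N) (hφ : ∀ h, φ (ι h) = h) (hj : f.comp j = ι.comp p)
    (hJ : ∀ x : FreeGroup γ, x.norm ≤ 1 → (j x).norm ≤ J) (w : FreeGroup γ) :
    HomotopicIn (shortRelators p (N * J + 1)) w.norm w ((traceHom f σ (j w)).left 1) := by
  have f_j (w) : f (j w) = ι (p w) := DFunLike.congr_fun hj w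
  have (L : List (γ × Bool)) (h : H) : HomotopicIn (shortRelators p (N * J + 1)) L.length
      (FreeGroup.mk L) ((traceHom f σ (j (FreeGroup.mk L))).left (ι h)) := by
    induction L generalizing h with
    | nil => exact .of_eq (by simp [← FreeGroup.one_eq_mk])
    | cons c L ih =>
      rw [← List.singleton_append, ← FreeGroup.mul_mk, map_mul, traceHom_mul_left, f_j, ← map_inv,
        ← map_mul, List.length_append, List.length_singleton]
      have norm_c : (FreeGroup.mk [c]).norm ≤ 1 := FreeGroup.norm_mk_le
      refine .mul (.of_norm_add_norm_le ?_ ?_) (ih _)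
      · rw [map_traceHom_left hσ, f_j, ← map_inv, ← map_mul, hφ, hφ, inv_mul_cancel_left]
      · rw [Nat.add_comm]
        exact Nat.add_le_add ((norm_traceHom_left_le hN _ _).trans
          (Nat.mul_le_mul_left N (hJ _ norm_c))) norm_c
  simpa only [FreeGroup.mk_toWord, map_one, FreeGroup.norm] using this w.toWord 1

theorem AreaLE.of_retraction {ι : H →* G} {j : FreeGroup γ →* FreeGroup α}
    (hσ : ∀ x a, p (σ x a) = (φ x)⁻¹ * φ (x * f (.of a)))
    (hN : ∀ x a, (σ x a).norm ≤ N) (hφ : ∀ h, φ (ι h) = h) (hj : f.comp j = ι.comp p)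
    (hJ : ∀ x : FreeGroup γ, x.norm ≤ 1 → (j x).norm ≤ J) {w : FreeGroup γ}
    (h : AreaLE (shortRelators f r) k (j w)) :
    AreaLE (shortRelators p (N * (r + J) + 1)) (w.norm + k) w := by
  have compare := (homotopicIn_traceHom_left hσ hN hφ hj hJ w).mono_set
    (shortRelators_mono p (r' := N * (r + J) + 1) (by lia))
  have traced := (h.traceHom_left hσ hN 1).mono_set
    (shortRelators_mono p (r' := N * (r + J) + 1) (by lia))
  exact homotopicIn_one_iff.mp (compare.trans (homotopicIn_one_iff.mpr traced))

end Transfer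

theorem semidirectProduct_commutator_mul_comm {N Q : Type*} [CommGroup N] [CommGroup Q]
    {φ : Q →* MulAut N} (x y : commutator (N ⋊[φ] Q)) : x * y = y * x := by
  have mem_range (x : commutator (N ⋊[φ] Q)) : (x : N ⋊[φ] Q) ∈ SemidirectProduct.inl.range := by
    rw [SemidirectProduct.range_inl_eq_ker_rightHom]
    exact Abelianization.commutator_subset_ker _ x.2
  obtain ⟨v, hv⟩ := mem_range x
  obtain ⟨w, hw⟩ := mem_range y
  ext1
  simp only [Subgroup.coe_mul, ← hv, ← hw, ← map_mul, mul_comm]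

section AffineGroup

open Multiplicative SemidirectProduct

variable {A Q : Type*} [CommRing A] [CommGroup Q]

/-- The action of `Q` on an `A`-module by scalar multiplication through a character `χ`, written
multiplicatively. -/
def scalarAut (χ : Q →* Aˣ) (M : Type*) [AddCommGroup M] [Module A M] :
    Q →* MulAut (Multiplicative M) :=
  (MulAutMultiplicative M).symm.toMonoidHom.comp ((DistribMulAction.toAddAut Aˣ M).comp χ)

/-- The group of affine transformations of the `A`-module `M` with arbitrary translations and with
scalar linear part given by a character `χ` of `Q`, as the semidirect product of `M` and `Q`. -/
abbrev AffineGroup (χ : Q →* Aˣ) (M : Type*) [AddCommGroup M] [Module A M] : Type _ :=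
  Multiplicative M ⋊[scalarAut χ M] Q

variable {χ : Q →* Aˣ} {M M' : Type*} [AddCommGroup M] [Module A M] [AddCommGroup M'] [Module A M']

@[simp]
theorem scalarAut_apply (e : Q) (v : Multiplicative M) :
    scalarAut χ M e v = ofAdd (χ e • v.toAdd) :=
  rfl

theorem inr_conj_inl (e : Q) (v : M) :
    (inr e * inl (ofAdd v) * (inr e)⁻¹ : AffineGroup χ M) = inl (ofAdd (χ e • v)) := by
  rw [← map_inv, ← inl_aut, scalarAut_apply, toAdd_ofAdd]

/-- The homomorphism of affine groups induced by a linear map. -/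
def AffineGroup.map (χ : Q →* Aˣ) (g : M →ₗ[A] M') : AffineGroup χ M →* AffineGroup χ M' :=
  SemidirectProduct.map (AddMonoidHom.toMultiplicative g.toAddMonoidHom) (.id Q) fun e => by
    ext v
    simp [Units.smul_def]

end AffineGroup

theorem freeGroup_norm_map_le {α β : Type*} [DecidableEq α] [DecidableEq β] (g : α → β)
    (u : FreeGroup α) : (FreeGroup.map g u).norm ≤ u.norm := by
  conv_lhs => rw [← FreeGroup.mk_toWord (x := u), FreeGroup.map.mk]
  exact FreeGroup.norm_mk_le.trans (List.length_map _).le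

theorem freeGroup_norm_conj_le {α : Type*} [DecidableEq α] (u x : FreeGroup α) :
    (u * x * u⁻¹).norm ≤ 2 * u.norm + x.norm := by
  have := FreeGroup.norm_mul_le (u * x) u⁻¹
  have := FreeGroup.norm_mul_le u x
  rw [FreeGroup.norm_inv_eq] at *
  lia

theorem freeGroup_norm_list_prod_le {α : Type*} [DecidableEq α] {k : ℕ} (L : List (FreeGroup α))
    (hL : ∀ x ∈ L, x.norm ≤ k) : L.prod.norm ≤ L.length * k := by
  induction L with
  | nil => simp
  | cons x L ih =>
    rw [List.forall_mem_cons] at hL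
    rw [List.prod_cons, List.length_cons, Nat.succ_mul, Nat.add_comm]
    exact (FreeGroup.norm_mul_le _ _).trans (Nat.add_le_add hL.1 (ih hL.2))

theorem freeGroup_norm_lift_le {α γ : Type*} [DecidableEq α] [DecidableEq γ]
    {f : γ → FreeGroup α} {k : ℕ} (hf : ∀ s, (f s).norm ≤ k) (w : FreeGroup γ) :
    (FreeGroup.lift f w).norm ≤ w.norm * k := by
  conv_lhs => rw [← FreeGroup.mk_toWord (x := w), FreeGroup.lift_mk]
  refine (freeGroup_norm_list_prod_le (k := k) _ ?_).trans_eq (by rw [List.length_map]; rfl)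
  simp only [List.forall_mem_map]
  rintro ⟨s, ε⟩ -
  cases ε <;> simp [hf]

theorem norm_map_inl_conj_le {β τ : Type*} [DecidableEq β] [DecidableEq τ] {u : FreeGroup β} {r : ℕ}
    (hu : u.norm ≤ r) (x : τ) :
    (FreeGroup.map .inl u * .of (.inr x) * (FreeGroup.map .inl u)⁻¹ : FreeGroup (β ⊕ τ)).norm ≤
      2 * r + 1 := by
  have := freeGroup_norm_conj_le (FreeGroup.map .inl u) (.of (.inr x) : FreeGroup (β ⊕ τ))
  have := freeGroup_norm_map_le (Sum.inl : β → β ⊕ τ) u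
  rw [FreeGroup.norm_of] at *
  lia

theorem norm_normalWord_le {α β ι : Type*} [DecidableEq α] {θ : FreeGroup β →* FreeGroup α}
    {q : ι → FreeGroup β} {s : List ι} {l k m : ℕ} {κ : ι → FreeGroup α} {u : FreeGroup β}
    (hκ : ∀ i, (atLevel θ (q i) l (κ i)).norm ≤ k) (hu : (θ u).norm ≤ m) :
    (normalWord θ q s l κ u).norm ≤ s.length * k + m := by
  have := freeGroup_norm_list_prod_le (s.map fun i => atLevel θ (q i) l (κ i)) (k := k)
    (List.forall_mem_map.mpr fun i _ => hκ i)
  rw [List.length_map] at this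
  exact (FreeGroup.norm_mul_le _ _).trans (Nat.add_le_add this hu)

section Spell

open Multiplicative SemidirectProduct

variable {A β ι : Type*} [CommRing A] [DecidableEq ι] {χ : Abelianization (FreeGroup β) →* Aˣ}
  {P : ι → Set A} {i : ι}

/-- The element of `AffineGroup χ (ι → A)` spelled by a word in the letters `β`, acting by scalar
multiplication, and in the elements of the balls `P i`, acting by translation of the `i`-th
coordinate. -/
def spell (χ : Abelianization (FreeGroup β) →* Aˣ) (P : ι → Set A) :
    FreeGroup (β ⊕ Σ i, P i) →* AffineGroup χ (ι → A) :=
  FreeGroup.lift <| Sum.elim (fun b => inr (.of (.of b)))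
    fun a => inl (ofAdd (Pi.single a.1 (a.2 : A)))

/-- The letters of `spell χ P` that come from `P i`. -/
def ballLetters (β : Type*) (P : ι → Set A) (i : ι) : Set (FreeGroup (β ⊕ Σ i, P i)) :=
  Set.range fun a : P i => .of (.inr ⟨i, a⟩)

@[simp]
theorem spell_map_inl (u : FreeGroup β) : spell χ P (FreeGroup.map .inl u) = inr (.of u) := by
  have : (spell χ P).comp (FreeGroup.map .inl) = inr.comp Abelianization.of :=
    FreeGroup.ext_hom _ _ fun b => by simp [spell]
  exact DFunLike.congr_fun this u

@[simp]
theorem spell_of_inr (a : P i) :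
    spell χ P (.of (.inr ⟨i, a⟩)) = inl (ofAdd (Pi.single i (a : A))) := by
  simp [spell]

theorem spell_conj (u : FreeGroup β) (a : P i) :
    spell χ P (FreeGroup.map .inl u * .of (.inr ⟨i, a⟩) * (FreeGroup.map .inl u)⁻¹) =
      inl (ofAdd (Pi.single i (χ (.of u) • (a : A)))) := by
  rw [map_mul, map_mul, map_inv, spell_map_inl, spell_of_inr, inr_conj_inl, Pi.single_smul]

theorem spell_normalWord [Fintype ι] (q : ι → FreeGroup β) (l : ℕ) (a : ∀ i, P i)
    (u : FreeGroup β) :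
    spell χ P (normalWord (FreeGroup.map .inl) q Finset.univ.toList l
      (fun i => .of (.inr ⟨i, a i⟩)) u) =
        inl (ofAdd fun i => χ (.of (q i ^ l)) • (a i : A)) * inr (.of u) := by
  rw [normalWord, map_mul, spell_map_inl, map_list_prod, List.map_map]
  simp only [Function.comp_def, atLevel, spell_conj]
  rw [← Function.comp_def (inl : Multiplicative (ι → A) →* AffineGroup χ (ι → A)),
    ← List.map_map, ← map_list_prod, Finset.prod_map_toList, ← ofAdd_sum, Finset.univ_sum_single]

theorem eq_one_of_spell_normalWord [Fintype ι] {q : ι → FreeGroup β} {l : ℕ} {a : ∀ i, P i}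
    {u : FreeGroup β}
    (e : spell χ P (normalWord (FreeGroup.map .inl) q Finset.univ.toList l
      (fun i => .of (.inr ⟨i, a i⟩)) u) = 1) :
    (∀ i, spell χ P (.of (.inr ⟨i, a i⟩)) = 1) ∧ Abelianization.of u = 1 := by
  rw [spell_normalWord, ← mk_eq_inl_mul_inr] at e
  obtain ⟨left, right⟩ := SemidirectProduct.ext_iff.mp e
  refine ⟨fun i => ?_, right⟩
  have : χ (.of (q i ^ l)) • (a i : A) = 0 := congrFun left i
  rw [smul_eq_zero_iff_eq] at this
  simp [this]

end Spell

section ContractingFamily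

open Multiplicative SemidirectProduct Pointwise

variable {A β ι : Type*} [CommRing A] [DecidableEq β]

/-- Subsets `P i` of a ring `A`, playing the role of the unit balls of absolute values on `A`, such
that scalar multiplication through the character `χ` contracts the ball `P i` by
`x * (q i)⁻¹` for every letter `x`, and contracts any two of the balls simultaneously relative to a
common word `p`. The last two conditions say that the diagonal copy of `A` is cocompact and
discrete in the product of the completions. -/
structure IsContractingFamily (χ : Abelianization (FreeGroup β) →* Aˣ) (P : ι → Set A)
    (q : ι → FreeGroup β) (c : ℕ) : Prop where
  zero_mem : ∀ i, 0 ∈ P i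
  one_mem : ∀ i, 1 ∈ P i
  neg_mem : ∀ i, ∀ a ∈ P i, -a ∈ P i
  norm_le : ∀ i, (q i).norm ≤ c
  letter : ∀ i x, x.norm ≤ 1 → Set.MapsTo (χ (.of (x * (q i)⁻¹)) • ·) (P i) (P i)
  add_mem : ∀ i, ∀ a ∈ P i, ∀ b ∈ P i, χ (.of (q i)⁻¹) • (a + b) ∈ P i
  exists_common : ∀ i j, i ≠ j → ∃ p : FreeGroup β, p.norm ≤ c ∧
    Set.MapsTo (χ (.of (q i * p⁻¹)) • ·) (P i) (P i) ∧
    Set.MapsTo (χ (.of (q j * p⁻¹)) • ·) (P j) (P j)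
  exists_round : ∀ w : ι → A, ∃ r, ∀ i, w i - r ∈ P i
  finite_iInter : ∀ a : A, (⋂ i, (P i + P i + a • P i)).Finite

variable [DecidableEq ι] [DecidableEq A] {χ : Abelianization (FreeGroup β) →* Aˣ} {P : ι → Set A}
  {q : ι → FreeGroup β} {c r : ℕ} {i : ι} {u x : FreeGroup β}

theorem contracts_ballLetters (hu : Set.MapsTo (χ (.of u) • ·) (P i) (P i))
    (hr : 2 * u.norm + 2 ≤ r) :
    Contracts (shortRelators (spell χ P) r) (ballLetters β P i) 1 (FreeGroup.map .inl u) := by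
  rintro _ ⟨a, rfl⟩
  refine ⟨_, ⟨⟨_, hu a.2⟩, rfl⟩, .of_norm_add_norm_le ?_ ?_⟩
  · rw [spell_conj, spell_of_inr]
  · have := norm_map_inl_conj_le le_rfl (⟨i, a⟩ : Σ i, P i) (u := u)
    rw [FreeGroup.norm_of]
    lia

namespace IsContractingFamily

theorem isContractingSystem (h : IsContractingFamily χ P q c) (hr : 4 * c + 4 ≤ r) :
    IsContractingSystem (shortRelators (spell χ P) r) (FreeGroup.map .inl) (ballLetters β P)
      q c where
  letter_comm x y hx hy := by
    refine .of_norm_add_norm_le ?_ ?_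
    · rw [spell_map_inl, spell_map_inl, map_mul Abelianization.of x, mul_comm, ← map_mul]
    · have := freeGroup_norm_map_le (Sum.inl : β → β ⊕ Σ i, P i) (x * y)
      have := freeGroup_norm_map_le (Sum.inl : β → β ⊕ Σ i, P i) (y * x)
      have := FreeGroup.norm_mul_le x y
      have := FreeGroup.norm_mul_le y x
      lia
  norm_le := h.norm_le
  contracts i x hx := by
    refine contracts_ballLetters (h.letter i x hx) ?_
    have := FreeGroup.norm_mul_le x (q i)⁻¹
    have := h.norm_le i
    rw [FreeGroup.norm_inv_eq] at *
    lia
  mul_mem := by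
    rintro i _ ⟨a, rfl⟩ _ ⟨b, rfl⟩
    refine ⟨_, ⟨⟨_, h.add_mem i a a.2 b b.2⟩, rfl⟩, .of_norm_add_norm_le ?_ ?_⟩
    · rw [map_mul, spell_of_inr, spell_of_inr, spell_conj, ← map_mul, ← ofAdd_add,
        ← Pi.single_add, smul_smul, ← map_mul, ← map_mul]
      simp
    · have := FreeGroup.norm_mul_le (.of (.inr ⟨i, a⟩) : FreeGroup (β ⊕ Σ i, P i))
        (.of (.inr ⟨i, b⟩))
      have := norm_map_inl_conj_le (h.norm_le i) (⟨i, _, h.add_mem i a a.2 b b.2⟩ : Σ i, P i)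
      simp only [FreeGroup.norm_of] at *
      lia
  comm_of_ne := by
    rintro i j - _ ⟨a, rfl⟩ _ ⟨b, rfl⟩
    refine .of_norm_add_norm_le ?_ ?_
    · rw [map_mul, map_mul, spell_of_inr, spell_of_inr, ← map_mul inl, ← map_mul inl, mul_comm]
    · have := FreeGroup.norm_mul_le (.of (.inr ⟨i, a⟩) : FreeGroup (β ⊕ Σ i, P i))
        (.of (.inr ⟨j, b⟩))
      have := FreeGroup.norm_mul_le (.of (.inr ⟨j, b⟩) : FreeGroup (β ⊕ Σ i, P i))
        (.of (.inr ⟨i, a⟩))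
      simp only [FreeGroup.norm_of] at *
      lia
  exists_common i j hij := by
    obtain ⟨p, hp, maps_i, maps_j⟩ := h.exists_common i j hij
    have norm_le (i) : 2 * (q i * p⁻¹).norm + 2 ≤ r := by
      have := FreeGroup.norm_mul_le (q i) p⁻¹
      have := h.norm_le i
      rw [FreeGroup.norm_inv_eq] at *
      lia
    exact ⟨p, hp, contracts_ballLetters maps_i (norm_le i),
      contracts_ballLetters maps_j (norm_le j)⟩

variable [Fintype ι]

theorem hasNormalForm (h : IsContractingFamily χ P q c) {a : A} (ha : ∀ i, a ∈ P i)
    (hx : x.norm ≤ 1) {w : FreeGroup (β ⊕ Σ i, P i)}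
    (hw : spell χ P w = inl (ofAdd fun _ => a) * inr (.of x))
    (hr : w.norm + Fintype.card ι * (2 * c + 1) + 1 ≤ r) :
    HasNormalForm (shortRelators (spell χ P) r) (FreeGroup.map .inl) (ballLetters β P) q
      Finset.univ.toList 1 1 w := by
  have contract (i) : χ (.of (q i)⁻¹) • a ∈ P i := by
    simpa using h.letter i 1 (by simp) (ha i)
  refine ⟨fun i => .of (.inr ⟨i, _, contract i⟩), x, fun i => ⟨_, rfl⟩, hx,
    .of_norm_add_norm_le ?_ ?_⟩
  · rw [hw, spell_normalWord]
    simp only [pow_one, smul_smul, ← map_mul, mul_inv_cancel, map_one, one_smul]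
  · have := norm_normalWord_le (s := Finset.univ.toList)
      (κ := fun i => (.of (.inr ⟨i, _, contract i⟩) : FreeGroup (β ⊕ Σ i, P i)))
      (fun i => (norm_map_inl_conj_le (by simpa using h.norm_le i) _ : _ ≤ 2 * c + 1))
      ((freeGroup_norm_map_le Sum.inl x).trans hx) (q := q) (l := 1)
    rw [Finset.length_toList, Finset.card_univ] at this
    lia

end IsContractingFamily

end ContractingFamily

section QuadraticIsoperimetry

open Multiplicative SemidirectProduct Pointwise

/-- The group `H` satisfies a quadratic isoperimetric inequality: it has a finite presentation in
which every null-homotopic word of length `l` is a product of at most `C * l ^ 2 + C` conjugates of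
relators. -/
def HasQuadraticIsoperimetry (H : Type*) [Group H] : Prop :=
  ∃ S : Set H, S.Finite ∧ Subgroup.closure S = ⊤ ∧
    ∃ R : Set (FreeGroup S), R.Finite ∧ (∀ r ∈ R, pi S r = 1) ∧
      ∃ C : ℝ, ∀ w : FreeGroup S, pi S w = 1 →
        ∃ L : List (FreeGroup S × FreeGroup S),
          (L.length : ℝ) ≤ C * (len S w : ℝ) ^ 2 + C ∧
          (∀ p ∈ L, p.2 ∈ R ∨ p.2⁻¹ ∈ R) ∧
          w = (L.map fun p => p.1 * p.2 * p.1⁻¹).prod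

theorem HasQuadraticIsoperimetry.of_areaLE_shortRelators {H : Type*} [Group H] {S : Set H}
    [DecidableEq S] (finite : S.Finite) (closure_eq_top : Subgroup.closure S = ⊤) {r C : ℕ}
    (areaLE : ∀ w, pi S w = 1 → AreaLE (shortRelators (pi S) r) (C * (w.norm + 1) ^ 2) w) :
    HasQuadraticIsoperimetry H := by
  have := finite.to_subtype
  refine ⟨S, finite, closure_eq_top, _, shortRelators_finite (pi S) r, fun w hw => hw.1, 2 * C,
    fun w hw => ?_⟩
  obtain ⟨L, length_le, mem, rfl⟩ := areaLE w hw
  refine ⟨L, ?_, mem, rfl⟩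
  set w := (L.map fun p => p.1 * p.2 * p.1⁻¹).prod
  have len_eq : len S w = w.norm := by
    rw [len, Subsingleton.elim (Classical.decEq S)]
  calc
    (L.length : ℝ) ≤ C * (w.norm + 1 : ℝ) ^ 2 := mod_cast length_le
    _ ≤ C * (2 * ((w.norm : ℝ) ^ 2 + 1)) := by
      gcongr
      simpa using add_sq_le (a := (w.norm : ℝ)) (b := 1)
    _ = 2 * C * (len S w : ℝ) ^ 2 + 2 * C := by
      rw [len_eq]
      ring

namespace AffineGroup

variable {A Q β ι : Type*} [CommRing A] [CommGroup Q]

/-- The map of affine groups that replaces translations by their images under `r`, extended so as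
to commute with left multiplication by `Q`. -/
def round (χ : Q →* Aˣ) (r : (ι → A) → A) (g : AffineGroup χ (ι → A)) : AffineGroup χ A :=
  inr g.right * inl (ofAdd (r ((χ g.right)⁻¹ • g.left.toAdd)))

theorem inv_round_mul_round_mul (χ : Q →* Aˣ) (r : (ι → A) → A) (x g : AffineGroup χ (ι → A)) :
    (round χ r x)⁻¹ * round χ r (x * g) =
      inl (ofAdd (χ g.right • r ((χ g.right)⁻¹ • ((χ x.right)⁻¹ • x.left.toAdd + g.left.toAdd)) -
        r ((χ x.right)⁻¹ • x.left.toAdd))) * inr g.right := by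
  have : (χ (x * g).right)⁻¹ • (x * g).left.toAdd =
      (χ g.right)⁻¹ • ((χ x.right)⁻¹ • x.left.toAdd + g.left.toAdd) := by
    simp [smul_add, smul_smul, mul_inv_rev, mul_assoc]
  rw [round, round, this, sub_eq_neg_add, ofAdd_add, map_mul, ← inr_conj_inl, mul_right, map_mul]
  simp [mul_assoc]

/-- The diagonal embedding of affine groups. -/
def diagonal (χ : Q →* Aˣ) (ι : Type*) : AffineGroup χ A →* AffineGroup χ (ι → A) :=
  map χ (LinearMap.pi fun _ => .id)

theorem round_diagonal {χ : Q →* Aˣ} {r : (ι → A) → A} (hr : ∀ a, r (fun _ => a) = a)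
    (g : AffineGroup χ A) : round χ r (diagonal χ ι g) = g := by
  have : r ((χ g.right)⁻¹ • (diagonal χ ι g).left.toAdd) = (χ g.right)⁻¹ • g.left.toAdd :=
    hr ((χ g.right)⁻¹ • g.left.toAdd)
  rw [round, show (diagonal χ ι g).right = g.right from rfl, this]
  ext1 <;> simp

@[simp]
theorem diagonal_inl (χ : Q →* Aˣ) (a : A) :
    diagonal χ ι (inl (ofAdd a)) = inl (ofAdd fun _ => a) := by
  rw [diagonal, map, SemidirectProduct.map_inl]
  rfl

@[simp]
theorem diagonal_inr (χ : Q →* Aˣ) (e : Q) :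
    diagonal χ ι (inr e : AffineGroup χ A) = inr e := by
  rw [diagonal, map, SemidirectProduct.map_inr, MonoidHom.id_apply]

/-- The standard generators of `AffineGroup χ A` for a free abelian group of scalings: the
translation by `1` and the basis elements. -/
def generators (χ : Abelianization (FreeGroup β) →* Aˣ) : Set (AffineGroup χ A) :=
  insert (inl (ofAdd 1)) (Set.range fun b => inr (.of (.of b)))

theorem closure_generators {χ : Abelianization (FreeGroup β) →* Aˣ}
    (hχ : ∀ a : A, ∃ e, ∃ z : ℤ, a = χ e • (z : A)) :
    Subgroup.closure (generators χ) = ⊤ := by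
  have inr_mem (e) : inr e ∈ Subgroup.closure (generators χ) := by
    obtain ⟨u, rfl⟩ := QuotientGroup.mk_surjective e
    let θ : FreeGroup β →* AffineGroup χ A := inr.comp Abelianization.of
    change θ u ∈ _
    induction u using FreeGroup.induction_on with
    | C1 => exact one_mem _
    | of b => exact Subgroup.subset_closure (.inr ⟨b, rfl⟩)
    | inv_of b ih => simpa only [map_inv] using inv_mem ih
    | mul u v hu hv => simpa only [map_mul] using mul_mem hu hv
  have inl_mem (a : A) : inl (ofAdd a) ∈ Subgroup.closure (generators χ) := by
    obtain ⟨e, z, rfl⟩ := hχ a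
    rw [← inr_conj_inl, ← zsmul_one, ofAdd_zsmul, map_zpow]
    exact mul_mem (mul_mem (inr_mem e)
      (zpow_mem (Subgroup.subset_closure (Set.mem_insert ..)) z)) (inv_mem (inr_mem e))
  refine eq_top_iff.mpr fun g _ => ?_
  rw [← inl_left_mul_inr_right g]
  exact mul_mem (inl_mem g.left.toAdd) (inr_mem g.right)

end AffineGroup

namespace IsContractingFamily

variable {A β ι : Type*} [CommRing A] [DecidableEq β]
  {χ : Abelianization (FreeGroup β) →* Aˣ} {P : ι → Set A} {q : ι → FreeGroup β} {c : ℕ}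

theorem exists_round_const [Nonempty ι] (h : IsContractingFamily χ P q c) :
    ∃ r : (ι → A) → A, (∀ w i, w i - r w ∈ P i) ∧ ∀ a, r (fun _ => a) = a := by
  classical
  choose r hr using h.exists_round
  let i₀ : ι := Classical.arbitrary ι
  refine ⟨fun w => if w = fun _ => w i₀ then w i₀ else r w, fun w i => ?_, by simp⟩
  dsimp only
  split_ifs with hw
  · rw [hw, sub_self]
    exact h.zero_mem i
  · exact hr w i

variable [DecidableEq ι]

theorem spell_left_mem (h : IsContractingFamily χ P q c) (a : β ⊕ Σ i, P i) (i : ι) :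
    (spell χ P (.of a)).left.toAdd i ∈ P i := by
  obtain b | ⟨j, a, ha⟩ := a
  · simpa [spell] using h.zero_mem i
  · obtain rfl | hij := eq_or_ne i j
    · simpa using ha
    · simpa [hij] using h.zero_mem i

theorem finite_displacements [Finite β] (h : IsContractingFamily χ P q c) {r : (ι → A) → A}
    (hr : ∀ w i, w i - r w ∈ P i) :
    {d | ∃ x a, d = (AffineGroup.round χ r x)⁻¹ *
      AffineGroup.round χ r (x * spell χ P (.of a))}.Finite := by
  have right_finite : (Set.range fun a => (spell χ P (.of a)).right).Finite := by
    refine ((Set.finite_range fun b => Abelianization.of (.of b)).insert 1).subset ?_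
    rintro _ ⟨b | a, rfl⟩ <;> simp [spell]
  refine (right_finite.biUnion fun e _ =>
    (h.finite_iInter (χ e)).image fun d => inl (ofAdd d) * inr e).subset ?_
  rintro _ ⟨x, a, rfl⟩
  rw [AffineGroup.inv_round_mul_round_mul]
  refine Set.mem_biUnion ⟨a, rfl⟩ ⟨_, Set.mem_iInter.mpr fun i => ?_, rfl⟩
  set v := (spell χ P (.of a)).left.toAdd
  set e := χ (spell χ P (.of a)).right
  set w := (χ x.right)⁻¹ • x.left.toAdd
  refine ⟨w i - r w + v i, Set.add_mem_add (hr w i) (h.spell_left_mem a i), _,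
    Set.smul_mem_smul_set (h.neg_mem i _ (hr (e⁻¹ • (w + v)) i)), ?_⟩
  change w i - r w + v i + e • -(e⁻¹ • (w i + v i) - r (e⁻¹ • (w + v))) = _
  rw [neg_sub, smul_sub, smul_inv_smul]
  ring

variable [Fintype ι] [DecidableEq A]

theorem exists_spell_eq_diagonal (h : IsContractingFamily χ P q c) {s : AffineGroup χ A}
    (hs : s ∈ AffineGroup.generators χ) :
    ∃ w, w.norm ≤ Fintype.card ι + 1 ∧ spell χ P w = AffineGroup.diagonal χ ι s := by
  obtain rfl | ⟨b, rfl⟩ := hs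
  · refine ⟨normalWord (FreeGroup.map .inl) q Finset.univ.toList 0
      (fun i => .of (.inr ⟨i, 1, h.one_mem i⟩)) 1, ?_, ?_⟩
    · refine (norm_normalWord_le (k := 1) (m := 0) (fun i => ?_) ?_).trans ?_ <;> simp [atLevel]
    · rw [spell_normalWord]
      simp
  · exact ⟨.of (.inl b), by simp, by simp [spell]⟩

theorem hasNormalForm_of_mem_generators (h : IsContractingFamily χ P q c) {s : AffineGroup χ A}
    (hs : s ∈ AffineGroup.generators χ ∨ s⁻¹ ∈ AffineGroup.generators χ)
    {w : FreeGroup (β ⊕ Σ i, P i)} {r : ℕ} (hw : w.norm ≤ Fintype.card ι + 1)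
    (hws : spell χ P w = AffineGroup.diagonal χ ι s)
    (hr : 4 * (Fintype.card ι + 1) * (c + 1) ≤ r) :
    HasNormalForm (shortRelators (spell χ P) r) (FreeGroup.map .inl) (ballLetters β P) q
      Finset.univ.toList 1 1 w := by
  obtain ⟨a, x, ha, hx, rfl⟩ : ∃ a x, (∀ i, a ∈ P i) ∧ x.norm ≤ 1 ∧
      s = inl (ofAdd a) * inr (.of x) := by
    obtain (rfl | ⟨b, rfl⟩) | hs := hs
    · exact ⟨1, 1, h.one_mem, by simp, by simp⟩
    · exact ⟨0, .of b, h.zero_mem, by simp, by simp⟩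
    · rw [← inv_inv s]
      obtain hs | ⟨b, hs⟩ := hs
      · exact ⟨-1, 1, fun i => h.neg_mem i _ (h.one_mem i), by simp, by simp [hs]⟩
      · exact ⟨0, (.of b)⁻¹, h.zero_mem, by simp, by simp [← hs]⟩
  refine h.hasNormalForm ha hx (by simp [hws]) (by nlinarith)

theorem exists_areaLE_lift (h : IsContractingFamily χ P q c)
    [DecidableEq (AffineGroup.generators χ)]
    {word : AffineGroup.generators χ → FreeGroup (β ⊕ Σ i, P i)}
    (norm_word : ∀ s, (word s).norm ≤ Fintype.card ι + 1)
    (spell_word : ∀ s, spell χ P (word s) = AffineGroup.diagonal χ ι s) :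
    ∃ r C, ∀ w, spell χ P (FreeGroup.lift word w) = 1 →
      AreaLE (shortRelators (spell χ P) r) (C * (w.norm + 1) ^ 2) (FreeGroup.lift word w) := by
  refine ⟨4 * (Fintype.card ι + 1) * (c + 1),
    4 * (1200 * (Fintype.card ι + 1) ^ 2 * (c + 1) ^ 2 + 1 + Fintype.card ι + 4), fun w hw => ?_⟩
  have system := h.isContractingSystem (r := 4 * (Fintype.card ι + 1) * (c + 1)) (by nlinarith)
  have lift_w : FreeGroup.lift word w =
      (w.toWord.map fun x => cond x.2 (word x.1) (word x.1)⁻¹).prod := by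
    rw [← FreeGroup.lift_mk, FreeGroup.mk_toWord]
  rw [lift_w] at hw ⊢
  have area := system.areaLE_list_prod (f := spell χ P) (a := 1)
    (Finset.nodup_toList Finset.univ) ?_ (fun v hv => hv.1) ?_ ?_ hw
  · simpa [FreeGroup.norm] using area
  · refine h.hasNormalForm (x := 1) h.zero_mem (by simp) ?_ (by rw [FreeGroup.norm_one]; nlinarith)
    simp [← Pi.zero_def]
  · rintro l κ u hκ e
    choose a ha using hκ
    obtain rfl := (funext ha).symm
    obtain ⟨spell_eq_one, of_eq_one⟩ := eq_one_of_spell_normalWord e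
    refine ⟨fun i => .of_norm_add_norm_le (by rw [spell_eq_one, map_one]) ?_, of_eq_one⟩
    rw [FreeGroup.norm_of, FreeGroup.norm_one]
    nlinarith
  · simp only [List.forall_mem_map]
    rintro ⟨s, _ | _⟩ -
    · exact h.hasNormalForm_of_mem_generators (s := s⁻¹) (.inr (by simp))
        (by simpa using norm_word s) (by simp [spell_word]) le_rfl
    · exact h.hasNormalForm_of_mem_generators (.inl s.2) (norm_word s) (spell_word s) le_rfl

end IsContractingFamily

theorem IsContractingFamily.hasQuadraticIsoperimetry {A β ι : Type*} [CommRing A] [DecidableEq β]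
    [Finite β] [Finite ι] [Nonempty ι] {χ : Abelianization (FreeGroup β) →* Aˣ} {P : ι → Set A}
    {q : ι → FreeGroup β} {c : ℕ} (h : IsContractingFamily χ P q c)
    (hχ : ∀ a : A, ∃ e, ∃ z : ℤ, a = χ e • (z : A)) :
    HasQuadraticIsoperimetry (AffineGroup χ A) := by
  classical
  cases nonempty_fintype ι
  obtain ⟨r, hr, r_const⟩ := h.exists_round_const
  choose word norm_word spell_word using fun s : AffineGroup.generators χ =>
    h.exists_spell_eq_diagonal s.2
  have surjective : Function.Surjective (pi (AffineGroup.generators χ)) := by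
    rw [pi, FreeGroup.lift_surjective_iff_closure_range_eq_top, Subtype.range_coe]
    exact AffineGroup.closure_generators hχ
  obtain ⟨σ, N, hσ, hN⟩ := exists_displacement_words surjective (h.finite_displacements hr)
  obtain ⟨ρ, C, areaLE⟩ := h.exists_areaLE_lift norm_word spell_word
  have comm : (spell χ P).comp (FreeGroup.lift word) = (AffineGroup.diagonal χ ι).comp (pi _) :=
    FreeGroup.ext_hom _ _ fun s => by simp [spell_word, pi]
  refine .of_areaLE_shortRelators (S := AffineGroup.generators χ) ((Set.finite_range _).insert _)
    (AffineGroup.closure_generators hχ) (r := N * (ρ + (Fintype.card ι + 1)) + 1) (C := C + 1)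
    fun w hw => ?_
  have spell_w : spell χ P (FreeGroup.lift word w) = 1 := by
    rw [← MonoidHom.comp_apply, comm, MonoidHom.comp_apply, hw, map_one]
  refine (AreaLE.of_retraction hσ hN (AffineGroup.round_diagonal r_const) comm (fun x hx => ?_)
    (areaLE w spell_w)).mono ?_
  · exact (freeGroup_norm_lift_le norm_word x).trans
      ((Nat.mul_le_mul_right _ hx).trans_eq (one_mul _))
  · nlinarith

end QuadraticIsoperimetry

section IntAway

/-- The ring `ℤ[1/M]`. -/
def intAway (M : ℤ) : Subalgebra ℤ ℚ :=
  Algebra.adjoin ℤ {(M : ℚ)⁻¹}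

variable {M N : ℤ} {x : ℚ}

theorem mem_intAway (hM : M ≠ 0) : x ∈ intAway M ↔ ∃ k : ℕ, ∃ z : ℤ, x * M ^ k = z := by
  have hM' : (M : ℚ) ≠ 0 := mod_cast hM
  refine ⟨fun h => ?_, ?_⟩
  · induction h using Algebra.adjoin_induction with
    | mem x hx => exact ⟨1, 1, by rw [Set.mem_singleton_iff.mp hx]; simp [hM']⟩
    | algebraMap z => exact ⟨0, z, by simp⟩
    | add x y _ _ hx hy =>
      obtain ⟨k, z, hz⟩ := hx
      obtain ⟨l, w, hw⟩ := hy
      exact ⟨k + l, z * M ^ l + w * M ^ k, by push_cast; rw [← hz, ← hw]; ring⟩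
    | mul x y _ _ hx hy =>
      obtain ⟨k, z, hz⟩ := hx
      obtain ⟨l, w, hw⟩ := hy
      exact ⟨k + l, z * w, by push_cast; rw [← hz, ← hw]; ring⟩
  · rintro ⟨k, z, hz⟩
    rw [← eq_mul_inv_iff_mul_eq₀ (pow_ne_zero k hM'), ← inv_pow] at hz
    rw [hz]
    exact (intAway M).mul_mem ((intAway M).intCast_mem z)
      ((intAway M).pow_mem (Algebra.subset_adjoin rfl) k)

theorem inv_mem_intAway_of_dvd (hM : M ≠ 0) (h : N ∣ M) : (N : ℚ)⁻¹ ∈ intAway M := by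
  obtain ⟨m, rfl⟩ := h
  have hN : (N : ℚ) ≠ 0 := mod_cast left_ne_zero_of_mul hM
  exact (mem_intAway hM).mpr ⟨1, m, by push_cast; field_simp⟩

theorem intAway_le_of_dvd (hM : M ≠ 0) (h : N ∣ M) : intAway N ≤ intAway M :=
  Algebra.adjoin_le <| Set.singleton_subset_iff.mpr <| inv_mem_intAway_of_dvd hM h

theorem isUnit_intCast_of_dvd (hM : M ≠ 0) (h : N ∣ M) : IsUnit (N : intAway M) := by
  have hN : (N : ℚ) ≠ 0 := mod_cast ne_zero_of_dvd_ne_zero hM h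
  refine .of_mul_eq_one ⟨_, inv_mem_intAway_of_dvd hM h⟩ (Subtype.ext ?_)
  simp [hN]

theorem exists_intCast_eq_of_mem_intAway (hM : M ≠ 0) (hN : N ≠ 0) (hc : IsCoprime M N)
    (h : x ∈ intAway M) (h' : x ∈ intAway N) : ∃ z : ℤ, x = z := by
  obtain ⟨k, z, hz⟩ := (mem_intAway hM).mp h
  obtain ⟨l, w, hw⟩ := (mem_intAway hN).mp h'
  have cross_mul : z * N ^ l = M ^ k * w := by
    have : (z : ℚ) * N ^ l = M ^ k * w := by rw [← hz, ← hw]; ring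
    exact_mod_cast this
  obtain ⟨y, rfl⟩ : M ^ k ∣ z := hc.pow.dvd_of_dvd_mul_right ⟨w, cross_mul⟩
  have hMk : (M : ℚ) ^ k ≠ 0 := pow_ne_zero k (mod_cast hM)
  refine ⟨y, mul_right_cancel₀ hMk ?_⟩
  rw [hz]
  push_cast
  ring

theorem exists_add_eq_of_mem_intAway_mul (hM : M ≠ 0) (hN : N ≠ 0) (hc : IsCoprime M N)
    (h : x ∈ intAway (M * N)) : ∃ y ∈ intAway M, ∃ z ∈ intAway N, y + z = x := by
  obtain ⟨k, m, hm⟩ := (mem_intAway (mul_ne_zero hM hN)).mp h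
  obtain ⟨a, b, bezout⟩ := hc.pow (m := k) (n := k)
  have hMk : (M : ℚ) ^ k ≠ 0 := pow_ne_zero k (mod_cast hM)
  have hNk : (N : ℚ) ^ k ≠ 0 := pow_ne_zero k (mod_cast hN)
  refine ⟨m * b / M ^ k, (mem_intAway hM).mpr ⟨k, m * b, by push_cast; field_simp⟩,
    m * a / N ^ k, (mem_intAway hN).mpr ⟨k, m * a, by push_cast; field_simp⟩, ?_⟩
  have bezout' : (a : ℚ) * M ^ k + b * N ^ k = 1 := mod_cast bezout
  rw [← hm]
  push_cast
  rw [mul_pow]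
  field_simp
  linear_combination x * bezout'

theorem coe_units_inv (u : (intAway M)ˣ) :
    (((u⁻¹ : (intAway M)ˣ) : intAway M) : ℚ) = ((u : intAway M) : ℚ)⁻¹ :=
  map_units_inv (intAway M).val u

/-- The unit balls of `ℤ[1/(MN)]` for the real absolute value, for the absolute values at the primes
dividing `N`, and for those at the primes dividing `M`. -/
def intAwayBall (M N : ℤ) : Fin 3 → Set (intAway (M * N)) :=
  ![{a | |(a : ℚ)| ≤ 1}, {a | (a : ℚ) ∈ intAway M}, {a | (a : ℚ) ∈ intAway N}]

variable {a b : intAway (M * N)} {i : Fin 3}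

theorem mem_intAwayBall_zero : a ∈ intAwayBall M N 0 ↔ |(a : ℚ)| ≤ 1 :=
  Iff.rfl

theorem mem_intAwayBall_one : a ∈ intAwayBall M N 1 ↔ (a : ℚ) ∈ intAway M :=
  Iff.rfl

theorem mem_intAwayBall_two : a ∈ intAwayBall M N 2 ↔ (a : ℚ) ∈ intAway N :=
  Iff.rfl

theorem zero_mem_intAwayBall : 0 ∈ intAwayBall M N i := by
  fin_cases i
  · simp [mem_intAwayBall_zero]
  · exact (intAway M).zero_mem
  · exact (intAway N).zero_mem

theorem one_mem_intAwayBall : 1 ∈ intAwayBall M N i := by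
  fin_cases i
  · simp [mem_intAwayBall_zero]
  · exact (intAway M).one_mem
  · exact (intAway N).one_mem

theorem neg_mem_intAwayBall (ha : a ∈ intAwayBall M N i) : -a ∈ intAwayBall M N i := by
  fin_cases i
  · simpa [mem_intAwayBall_zero] using ha
  · exact (intAway M).neg_mem ha
  · exact (intAway N).neg_mem ha

theorem mul_mem_intAwayBall (ha : a ∈ intAwayBall M N i) (hb : b ∈ intAwayBall M N i) :
    a * b ∈ intAwayBall M N i := by
  fin_cases i
  · change |(a : ℚ) * b| ≤ 1
    rw [abs_mul]
    exact mul_le_one₀ ha (abs_nonneg _) hb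
  · exact (intAway M).mul_mem ha hb
  · exact (intAway N).mul_mem ha hb

theorem exists_sub_mem_intAwayBall (hM : M ≠ 0) (hN : N ≠ 0) (hc : IsCoprime M N)
    (w : Fin 3 → intAway (M * N)) : ∃ r, ∀ i, w i - r ∈ intAwayBall M N i := by
  obtain ⟨y, hy, z, hz, y_add_z⟩ := exists_add_eq_of_mem_intAway_mul hM hN hc (w 1 - w 2).2
  set r₀ : intAway (M * N) :=
    w 1 - ⟨y, intAway_le_of_dvd (mul_ne_zero hM hN) (dvd_mul_right M N) hy⟩ with hr₀
  set m : ℤ := ⌊(w 0 : ℚ) - r₀⌋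
  refine ⟨r₀ + m, fun i => ?_⟩
  fin_cases i
  · have floor_le : (m : ℚ) ≤ w 0 - r₀ := Int.floor_le _
    have lt_floor : (w 0 : ℚ) - r₀ < m + 1 := Int.lt_floor_add_one _
    simp only [Fin.zero_eta, mem_intAwayBall_zero, Subalgebra.coe_sub, Subalgebra.coe_add,
      SubringClass.coe_intCast, abs_le]
    constructor <;> linarith
  · have : ((w 1 - (r₀ + m) : intAway (M * N)) : ℚ) = y - m := by
      simp only [hr₀, Subalgebra.coe_sub, Subalgebra.coe_add, SubringClass.coe_intCast]
      ring
    simpa only [Fin.mk_one, mem_intAwayBall_one, this] using sub_mem hy (intCast_mem _ m)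
  · have : ((w 2 - (r₀ + m) : intAway (M * N)) : ℚ) = -z - m := by
      simp only [hr₀, Subalgebra.coe_sub, Subalgebra.coe_add, SubringClass.coe_intCast] at y_add_z ⊢
      linear_combination y_add_z
    simpa only [Fin.reduceFinMk, mem_intAwayBall_two, this] using
      sub_mem (neg_mem hz) (intCast_mem _ m)

theorem finite_of_abs_le_of_natCast_mul_eq_intCast {s : Set ℚ} {d : ℕ} {r : ℚ} (hd : d ≠ 0)
    (bounded : ∀ x ∈ s, |x| ≤ r) (mul_eq : ∀ x ∈ s, ∃ z : ℤ, d * x = z) : s.Finite := by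
  have hd' : (0 : ℚ) < d := mod_cast Nat.pos_of_ne_zero hd
  refine ((Set.finite_Icc (-⌈d * r⌉) ⌈d * r⌉).image fun z : ℤ => (z : ℚ) / d).subset fun x hx => ?_
  obtain ⟨z, hz⟩ := mul_eq x hx
  have abs_z_le : |(z : ℚ)| ≤ ⌈d * r⌉ := by
    rw [← hz, abs_mul, Nat.abs_cast]
    exact (mul_le_mul_of_nonneg_left (bounded x hx) hd'.le).trans (Int.le_ceil _)
  exact ⟨z, abs_le.mp (mod_cast abs_z_le), by simp [← hz, hd]⟩

open Pointwise in
theorem finite_iInter_intAwayBall (hM : M ≠ 0) (hN : N ≠ 0) (hc : IsCoprime M N)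
    (a : intAway (M * N)) :
    (⋂ i, (intAwayBall M N i + intAwayBall M N i + a • intAwayBall M N i)).Finite := by
  have den_mul_mem {R : Subalgebra ℤ ℚ} {b c e : ℚ} (hb : b ∈ R) (hc : c ∈ R) (he : e ∈ R) :
      ((a : ℚ).den : ℚ) * (b + c + a * e) ∈ R := by
    rw [mul_add, ← mul_assoc, Rat.den_mul_eq_num]
    exact R.add_mem (R.mul_mem (natCast_mem R _) (R.add_mem hb hc))
      (R.mul_mem (intCast_mem R _) he)
  refine .of_finite_image (f := Subtype.val) ?_ Subtype.val_injective.injOn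
  refine finite_of_abs_le_of_natCast_mul_eq_intCast (r := 2 + |(a : ℚ)|) (a : ℚ).den_nz ?_ ?_ <;>
    rintro _ ⟨x, hx, rfl⟩ <;> rw [Set.mem_iInter] at hx
  · obtain ⟨_, ⟨b, hb, c, hc, rfl⟩, _, ⟨e, he, rfl⟩, rfl⟩ := hx 0
    calc |(b + c + a * e : ℚ)| ≤ |(b : ℚ)| + |(c : ℚ)| + |(a : ℚ)| * |(e : ℚ)| := by
          rw [← abs_mul]
          exact (abs_add_le _ _).trans (add_le_add_left (abs_add_le _ _) _)
      _ ≤ 1 + 1 + |(a : ℚ)| * 1 := by gcongr <;> assumption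
      _ = 2 + |(a : ℚ)| := by ring
  · refine exists_intCast_eq_of_mem_intAway hM hN hc ?_ ?_
    · obtain ⟨_, ⟨b, hb, c, hc, rfl⟩, _, ⟨e, he, rfl⟩, rfl⟩ := hx 1
      exact den_mul_mem hb hc he
    · obtain ⟨_, ⟨b, hb, c, hc, rfl⟩, _, ⟨e, he, rfl⟩, rfl⟩ := hx 2
      exact den_mul_mem hb hc he

end IntAway

theorem eq_one_or_of_norm_le_one {β : Type*} [DecidableEq β] {x : FreeGroup β} (h : x.norm ≤ 1) :
    x = 1 ∨ ∃ b, x = FreeGroup.of b ∨ x = (FreeGroup.of b)⁻¹ := by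
  rw [← FreeGroup.mk_toWord (x := x)]
  match hL : x.toWord with
  | [] => exact .inl rfl
  | [(b, true)] => exact .inr ⟨b, .inl rfl⟩
  | [(b, false)] => exact .inr ⟨b, .inr rfl⟩
  | _ :: _ :: _ => simp [FreeGroup.norm, hL] at h

/-- The character of the free abelian group on `β` with prescribed values on the generators. -/
def freeAbelianCharacter {β A : Type*} [CommRing A] (g : β → Aˣ) :
    Abelianization (FreeGroup β) →* Aˣ :=
  Abelianization.lift (FreeGroup.lift g)

section IntAwayContracting

open Set

variable {M N n : ℤ} {g : Fin 3 → (intAway (M * N))ˣ}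

/-- With `g` taking the values `N`, `M`, `n`, the words of values `N * M`, `N⁻¹`, `M⁻¹`, whose
inverses contract the balls `intAwayBall M N i`. -/
def expandingWord : Fin 3 → FreeGroup (Fin 3) :=
  ![FreeGroup.of 0 * FreeGroup.of 1, (FreeGroup.of 0)⁻¹, (FreeGroup.of 1)⁻¹]

theorem mapsTo_smul_intAwayBall {u : (intAway (M * N))ˣ} {i : Fin 3}
    (hu : (u : intAway (M * N)) ∈ intAwayBall M N i) :
    MapsTo (u • ·) (intAwayBall M N i) (intAwayBall M N i) :=
  fun _ ha => mul_mem_intAwayBall hu ha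

theorem inv_mul_mem_intAway {K L d : ℤ} (hK : K ≠ 0) (hd : d ∣ K * L) :
    (d : ℚ)⁻¹ * L ∈ intAway K := by
  obtain ⟨e, he⟩ := hd
  by_cases hd : d = 0
  · simp [hd]
  refine (mem_intAway hK).mpr ⟨1, e, ?_⟩
  have hd' : (d : ℚ) ≠ 0 := mod_cast hd
  have he' : (K : ℚ) * L = d * e := mod_cast he
  field_simp
  linear_combination he'

theorem coe_freeAbelianCharacter_mul_inv (u v : FreeGroup (Fin 3)) :
    ((freeAbelianCharacter g (.of (u * v⁻¹)) : intAway (M * N)) : ℚ) =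
      ((freeAbelianCharacter g (.of u) : intAway (M * N)) : ℚ) *
        ((freeAbelianCharacter g (.of v) : intAway (M * N)) : ℚ)⁻¹ := by
  simp [coe_units_inv]

theorem exists_dvd_freeAbelianCharacter_eq {c : Fin 3 → ℤ}
    (hg : ∀ b, ((g b : intAway (M * N)) : ℚ) = c b) (hc : ∀ b, c b ∣ M * N)
    {x : FreeGroup (Fin 3)} (hx : x.norm ≤ 1) :
    ∃ d : ℤ, d ∣ M * N ∧
      (((freeAbelianCharacter g (.of x) : intAway (M * N)) : ℚ) = d ∨
        ((freeAbelianCharacter g (.of x) : intAway (M * N)) : ℚ) = (d : ℚ)⁻¹) := by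
  obtain rfl | ⟨b, rfl | rfl⟩ := eq_one_or_of_norm_le_one hx
  · exact ⟨1, one_dvd _, .inl (by simp)⟩
  · exact ⟨c b, hc b, .inl (by simp [freeAbelianCharacter, hg])⟩
  · exact ⟨c b, hc b, .inr (by simp [freeAbelianCharacter, coe_units_inv, hg])⟩

theorem coe_freeAbelianCharacter_expandingWord_inv
    (hg : ∀ b, ((g b : intAway (M * N)) : ℚ) = (![N, M, n] b : ℤ)) (i : Fin 3) :
    ((freeAbelianCharacter g (.of (expandingWord i)) : intAway (M * N)) : ℚ)⁻¹ =
      ![((M * N : ℤ) : ℚ)⁻¹, (N : ℚ), (M : ℚ)] i := by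
  fin_cases i <;> simp [freeAbelianCharacter, expandingWord, coe_units_inv, hg, mul_comm]

theorem abs_intCast_inv_le_one (z : ℤ) : |(z : ℚ)⁻¹| ≤ 1 := by
  rw [abs_inv, ← Int.cast_abs, ← Int.natCast_natAbs, Int.cast_natCast]
  exact Nat.cast_inv_le_one _

theorem vecCons_dvd_mul (hn : n ∣ M * N) (b : Fin 3) : ![N, M, n] b ∣ M * N := by
  fin_cases b
  exacts [dvd_mul_left N M, dvd_mul_right M N, hn]

theorem freeAbelianCharacter_letter_mem (hM : M ≠ 0) (hN : N ≠ 0) (hn : n ∣ M * N)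
    (hg : ∀ b, ((g b : intAway (M * N)) : ℚ) = (![N, M, n] b : ℤ)) (i : Fin 3)
    {x : FreeGroup (Fin 3)} (hx : x.norm ≤ 1) :
    (freeAbelianCharacter g (.of (x * (expandingWord i)⁻¹)) : intAway (M * N)) ∈
      intAwayBall M N i := by
  obtain ⟨d, hd, value⟩ := exists_dvd_freeAbelianCharacter_eq hg (vecCons_dvd_mul hn) hx
  have coe_eq := coe_freeAbelianCharacter_mul_inv (g := g) x (expandingWord i)
  rw [coe_freeAbelianCharacter_expandingWord_inv hg] at coe_eq
  have mem_intAway_of_dvd {K L : ℤ} (hK : K ≠ 0) (hd : d ∣ K * L) :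
      ((freeAbelianCharacter g (.of x) : intAway (M * N)) : ℚ) * L ∈ intAway K := by
    rcases value with value | value <;> rw [value]
    · exact (intAway K).mul_mem (intCast_mem _ d) (intCast_mem _ L)
    · exact inv_mul_mem_intAway hK hd
  obtain rfl | rfl | rfl : i = 0 ∨ i = 1 ∨ i = 2 := by lia
  · rw [mem_intAwayBall_zero, coe_eq]
    change |_ * ((M * N : ℤ) : ℚ)⁻¹| ≤ 1
    rcases value with value | value <;> rw [value]
    · obtain ⟨e, he⟩ := hd
      have hd₀ : (d : ℚ) ≠ 0 := mod_cast left_ne_zero_of_mul (he ▸ mul_ne_zero hM hN)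
      rw [he, Int.cast_mul, mul_inv, mul_inv_cancel_left₀ hd₀]
      exact abs_intCast_inv_le_one e
    · rw [← mul_inv, ← Int.cast_mul]
      exact abs_intCast_inv_le_one _
  · rw [mem_intAwayBall_one, coe_eq]
    exact mem_intAway_of_dvd hM hd
  · rw [mem_intAwayBall_two, coe_eq]
    exact mem_intAway_of_dvd hN (mul_comm M N ▸ hd)

theorem freeAbelianCharacter_add_mem (hMN : 2 ≤ |M * N|)
    (hg : ∀ b, ((g b : intAway (M * N)) : ℚ) = (![N, M, n] b : ℤ)) {i : Fin 3}
    {a b : intAway (M * N)} (ha : a ∈ intAwayBall M N i) (hb : b ∈ intAwayBall M N i) :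
    freeAbelianCharacter g (.of (expandingWord i)⁻¹) • (a + b) ∈ intAwayBall M N i := by
  have coe_eq : ((freeAbelianCharacter g (.of (expandingWord i)⁻¹) • (a + b) : intAway (M * N)) : ℚ)
      = ![((M * N : ℤ) : ℚ)⁻¹, (N : ℚ), (M : ℚ)] i * (a + b) := by
    rw [← coe_freeAbelianCharacter_expandingWord_inv hg, map_inv, map_inv, ← coe_units_inv]
    rfl
  obtain rfl | rfl | rfl : i = 0 ∨ i = 1 ∨ i = 2 := by lia
  · have hMN' : 2 ≤ |((M * N : ℤ) : ℚ)| := mod_cast hMN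
    rw [mem_intAwayBall_zero, coe_eq]
    change |((M * N : ℤ) : ℚ)⁻¹ * (a + b)| ≤ 1
    rw [abs_mul, abs_inv, inv_mul_le_one₀ (two_pos.trans_le hMN')]
    calc |(a + b : ℚ)| ≤ |(a : ℚ)| + |(b : ℚ)| := abs_add_le _ _
      _ ≤ 1 + 1 := add_le_add ha hb
      _ ≤ |((M * N : ℤ) : ℚ)| := one_add_one_eq_two.trans_le hMN'
  · rw [mem_intAwayBall_one, coe_eq]
    exact (intAway M).mul_mem (intCast_mem _ N) ((intAway M).add_mem ha hb)
  · rw [mem_intAwayBall_two, coe_eq]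
    exact (intAway N).mul_mem (intCast_mem _ M) ((intAway N).add_mem ha hb)

theorem exists_common_word (hN : 2 ≤ |N|) (hM : M = N ^ 2 + 1)
    (hg : ∀ b, ((g b : intAway (M * N)) : ℚ) = (![N, M, n] b : ℤ)) {i j : Fin 3} (hij : i < j) :
    ∃ p : FreeGroup (Fin 3), p.norm ≤ 8 ∧
      (freeAbelianCharacter g (.of (expandingWord i * p⁻¹)) : intAway (M * N)) ∈
        intAwayBall M N i ∧
      (freeAbelianCharacter g (.of (expandingWord j * p⁻¹)) : intAway (M * N)) ∈
        intAwayBall M N j := by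
  have hN₀ : N ≠ 0 := by rintro rfl; simp at hN
  have hN' : (N : ℚ) ≠ 0 := mod_cast hN₀
  have hM₀ : M ≠ 0 := by rw [hM]; positivity
  have hM' : (M : ℚ) ≠ 0 := mod_cast hM₀
  have hN_sq : (4 : ℚ) ≤ N ^ 2 := by
    rw [← sq_abs, ← Int.cast_abs]
    exact_mod_cast pow_le_pow_left₀ two_pos.le hN 2
  have hM_eq : (M : ℚ) = N ^ 2 + 1 := mod_cast hM
  obtain ⟨rfl, rfl⟩ | ⟨rfl, rfl⟩ | ⟨rfl, rfl⟩ :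
      i = 0 ∧ j = 1 ∨ i = 0 ∧ j = 2 ∨ i = 1 ∧ j = 2 := by lia
  · refine ⟨(FreeGroup.of 0)⁻¹ * FreeGroup.of 1 ^ 2, by decide, ?_, ?_⟩
    · have value : ((freeAbelianCharacter g (.of (expandingWord 0 *
          ((FreeGroup.of 0)⁻¹ * FreeGroup.of 1 ^ 2)⁻¹)) : intAway (M * N)) : ℚ) =
            N ^ 2 / M := by
        simp [freeAbelianCharacter, expandingWord, coe_units_inv, hg, field]
      rw [mem_intAwayBall_zero, value, hM_eq, abs_of_nonneg (by positivity),
        div_le_one (by positivity)]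
      exact le_add_of_nonneg_right zero_le_one
    · have value : ((freeAbelianCharacter g (.of (expandingWord 1 *
          ((FreeGroup.of 0)⁻¹ * FreeGroup.of 1 ^ 2)⁻¹)) : intAway (M * N)) : ℚ) =
            (M : ℚ)⁻¹ ^ 2 := by
        simp [freeAbelianCharacter, expandingWord, coe_units_inv, hg]
      rw [mem_intAwayBall_one, value]
      exact pow_mem (inv_mem_intAway_of_dvd hM₀ dvd_rfl) 2
  · refine ⟨FreeGroup.of 0 ^ 7 * (FreeGroup.of 1)⁻¹, by decide, ?_, ?_⟩
    · have value : ((freeAbelianCharacter g (.of (expandingWord 0 *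
          (FreeGroup.of 0 ^ 7 * (FreeGroup.of 1)⁻¹)⁻¹)) : intAway (M * N)) : ℚ) =
            M ^ 2 / (N ^ 2) ^ 3 := by
        simp [freeAbelianCharacter, expandingWord, coe_units_inv, hg, field]
      rw [mem_intAwayBall_zero, value, hM_eq, abs_of_nonneg (by positivity),
        div_le_one (by positivity)]
      nlinarith [mul_le_mul_of_nonneg_right hN_sq (sq_nonneg ((N : ℚ) ^ 2))]
    · have value : ((freeAbelianCharacter g (.of (expandingWord 2 *
          (FreeGroup.of 0 ^ 7 * (FreeGroup.of 1)⁻¹)⁻¹)) : intAway (M * N)) : ℚ) =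
            (N : ℚ)⁻¹ ^ 7 := by
        simp [freeAbelianCharacter, expandingWord, coe_units_inv, hg]
      rw [mem_intAwayBall_two, value]
      exact pow_mem (inv_mem_intAway_of_dvd hN₀ dvd_rfl) 7
  · refine ⟨(FreeGroup.of 0)⁻¹ * (FreeGroup.of 1)⁻¹, by decide, ?_, ?_⟩
    · rw [mem_intAwayBall_one]
      simp [freeAbelianCharacter, expandingWord, hg]
    · rw [mem_intAwayBall_two]
      simp [freeAbelianCharacter, expandingWord, hg]

end IntAwayContracting

section IntAwayAffine

variable {M N n : ℤ} {g : Fin 3 → (intAway (M * N))ˣ}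

theorem isContractingFamily_intAwayBall (hN : 2 ≤ |N|) (hM : M = N ^ 2 + 1) (hn : n ∣ M * N)
    (hg : ∀ b, ((g b : intAway (M * N)) : ℚ) = (![N, M, n] b : ℤ)) :
    IsContractingFamily (freeAbelianCharacter g) (intAwayBall M N) expandingWord 8 := by
  have hM₀ : M ≠ 0 := by rw [hM]; positivity
  have hN₀ : N ≠ 0 := by rintro rfl; simp at hN
  have hc : IsCoprime M N := ⟨1, -N, by rw [hM]; ring⟩
  have hMN : 2 ≤ |M * N| := by
    rw [abs_mul]
    exact hN.trans (le_mul_of_one_le_left (abs_nonneg N) (Int.one_le_abs hM₀))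
  refine ⟨fun i => zero_mem_intAwayBall, fun i => one_mem_intAwayBall,
    fun i a => neg_mem_intAwayBall, fun i => by fin_cases i <;> decide,
    fun i x hx => mapsTo_smul_intAwayBall (freeAbelianCharacter_letter_mem hM₀ hN₀ hn hg i hx),
    fun i a ha b hb => freeAbelianCharacter_add_mem hMN hg ha hb, fun i j hij => ?_,
    exists_sub_mem_intAwayBall hM₀ hN₀ hc, finite_iInter_intAwayBall hM₀ hN₀ hc⟩
  wlog hlt : i < j generalizing i j
  · obtain ⟨p, hp, hj, hi⟩ := this j i hij.symm (hij.lt_or_gt.resolve_left hlt)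
    exact ⟨p, hp, hi, hj⟩
  obtain ⟨p, hp, hi, hj⟩ := exists_common_word hN hM hg hlt
  exact ⟨p, hp, mapsTo_smul_intAwayBall hi, mapsTo_smul_intAwayBall hj⟩

theorem exists_eq_freeAbelianCharacter_smul (hMN : M * N ≠ 0)
    (hg : ∀ b, ((g b : intAway (M * N)) : ℚ) = (![N, M, n] b : ℤ)) (a : intAway (M * N)) :
    ∃ e, ∃ z : ℤ, a = freeAbelianCharacter g e • (z : intAway (M * N)) := by
  obtain ⟨k, z, hz⟩ := (mem_intAway hMN).mp a.2
  refine ⟨(.of (expandingWord 0 ^ k))⁻¹, z, ?_⟩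
  rw [map_inv, eq_inv_smul_iff]
  ext1
  simp [freeAbelianCharacter, expandingWord, hg, Units.smul_def, ← hz, mul_comm]

end IntAwayAffine

section BaumslagSolitar

open Multiplicative SemidirectProduct

variable {n : ℤ}

namespace BS

/-- The stable letter `t` of `BS(1,n)`. -/
def t (n : ℤ) : BS n :=
  PresentedGroup.of true

/-- The base generator `x` of `BS(1,n)`. -/
def x (n : ℤ) : BS n :=
  PresentedGroup.of false

theorem t_mul_x_mul_t_inv : t n * x n * (t n)⁻¹ = x n ^ n := by
  have relator : t n * x n * (t n)⁻¹ * x n ^ (-n) = 1 :=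
    PresentedGroup.one_of_mem (rels := BSrel n) rfl
  rwa [zpow_neg, mul_inv_eq_one] at relator

theorem t_pow_mul_x_zpow (i : ℕ) (z : ℤ) : t n ^ i * x n ^ z = x n ^ (n ^ i * z) * t n ^ i := by
  induction i generalizing z with
  | zero => simp
  | succ i ih =>
    have t_mul : t n * x n ^ z = x n ^ (n * z) * t n := by
      rw [zpow_mul, ← t_mul_x_mul_t_inv, conj_zpow, inv_mul_cancel_right]
    rw [pow_succ, mul_assoc, t_mul, ← mul_assoc, ih, mul_assoc, pow_succ, mul_assoc]

theorem closure_t_x : Subgroup.closure {t n, x n} = ⊤ := by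
  have range_of : Set.range (PresentedGroup.of : Bool → BS n) = {t n, x n} :=
    (Bool.range_eq _).trans (Set.pair_comm _ _)
  exact range_of ▸ PresentedGroup.closure_range_of (BSrel n)

theorem exists_eq_t_pow_inv_mul (g : BS n) :
    ∃ (i k : ℕ) (z : ℤ), g = (t n ^ i)⁻¹ * x n ^ z * t n ^ k := by
  have x_zpow_mul (w z : ℤ) (i k : ℕ) :
      x n ^ w * ((t n ^ i)⁻¹ * x n ^ z * t n ^ k) =
        (t n ^ i)⁻¹ * x n ^ (n ^ i * w + z) * t n ^ k := by
    rw [zpow_add, eq_inv_mul_of_mul_eq (t_pow_mul_x_zpow i w)]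
    group
  have hg : g ∈ Subgroup.closure {t n, x n} := by simp [closure_t_x]
  induction hg using Subgroup.closure_induction_left with
  | one => exact ⟨0, 0, 0, by simp⟩
  | mul_left y hy g _ ih =>
    obtain ⟨i, k, z, rfl⟩ := ih
    obtain rfl | rfl := hy
    · obtain _ | i := i
      · refine ⟨0, k + 1, n * z, ?_⟩
        have := t_pow_mul_x_zpow (n := n) 1 z
        rw [pow_one, pow_one] at this
        rw [pow_zero, inv_one, one_mul, one_mul, ← mul_assoc, this, mul_assoc, pow_succ']
      · exact ⟨i, k, z, by rw [pow_succ]; group⟩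
    · exact ⟨i, k, n ^ i * 1 + z, by rw [← x_zpow_mul, zpow_one]⟩
  | inv_mul_cancel y hy g _ ih =>
    obtain ⟨i, k, z, rfl⟩ := ih
    obtain rfl | rfl := hy
    · exact ⟨i + 1, k, z, by rw [pow_succ]; group⟩
    · exact ⟨i, k, n ^ i * (-1) + z, by rw [← x_zpow_mul, zpow_neg_one]⟩

variable {A Q : Type*} [CommRing A] [CommGroup Q] {χ : Q →* Aˣ} {e : Q}

theorem inl_ofAdd_one_zpow (z : ℤ) :
    (inl (ofAdd 1) : AffineGroup χ A) ^ z = inl (ofAdd (z : A)) := by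
  rw [← map_zpow, ← ofAdd_zsmul, zsmul_one]

/-- The homomorphism from `BS(1,n)` to the affine group over `A` that sends `x` to the translation
by `1` and `t` to an element `e` acting as multiplication by `n`. -/
def toAffineGroup (he : (χ e : A) = n) : BS n →* AffineGroup χ A :=
  PresentedGroup.toGroup
    (f := fun b => cond b (inr e) (inl (ofAdd 1) : AffineGroup χ A)) <| by
      rintro _ rfl
      simp [inr_conj_inl, inl_ofAdd_one_zpow, Units.smul_def, he]

@[simp]
theorem toAffineGroup_t (he : (χ e : A) = n) : toAffineGroup he (t n) = inr e :=
  PresentedGroup.toGroup.of _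

@[simp]
theorem toAffineGroup_x (he : (χ e : A) = n) : toAffineGroup he (x n) = inl (ofAdd 1) :=
  PresentedGroup.toGroup.of _

theorem toAffineGroup_injective [CharZero A] (he : (χ e : A) = n) (he' : ¬IsOfFinOrder e) :
    Function.Injective (toAffineGroup he) := by
  rw [injective_iff_map_eq_one]
  intro g hg
  obtain ⟨i, k, z, rfl⟩ := exists_eq_t_pow_inv_mul g
  simp only [map_mul, map_inv, map_pow, map_zpow, toAffineGroup_t, toAffineGroup_x,
    inl_ofAdd_one_zpow] at hg
  obtain rfl : i = k := by
    have : (e ^ i)⁻¹ * e ^ k = 1 := by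
      simpa only [map_mul, map_inv, map_pow, rightHom_inr, rightHom_inl, mul_one, map_one] using
        congrArg rightHom hg
    exact injective_pow_iff_not_isOfFinOrder.mpr he' (inv_mul_eq_one.mp this)
  rw [mul_assoc, inv_mul_eq_one, right_eq_mul, map_eq_one_iff _ inl_injective, ofAdd_eq_one,
    Int.cast_eq_zero] at hg
  simp [hg]

end BS

end BaumslagSolitar

theorem not_isOfFinOrder_of {β : Type*} (b : β) :
    ¬IsOfFinOrder (Abelianization.of (FreeGroup.of b)) := fun h => by
  classical
  have : IsOfFinOrder (Multiplicative.ofAdd (1 : ℤ)) := by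
    simpa [exponentSum] using (exponentSum b).isOfFinOrder h
  exact not_isOfFinAddOrder_of_isAddTorsionFree one_ne_zero (isOfFinOrder_ofAdd_iff.mp this)

/-- Main Theorem of Cornulier–Tessera: `BS(1,n)` embeds into a
finitely presented metabelian group with quadratic Dehn function. -/
theorem stmt12 (n : ℤ) (hn : n ≠ 0) :
    ∃ (H : Type) (_ : Group H) (f : BS n →* H),
      Function.Injective f ∧
      (∀ x y : commutator H, x * y = y * x) ∧
      ∃ S : Set H, S.Finite ∧ Subgroup.closure S = ⊤ ∧
        ∃ R : Set (FreeGroup S), R.Finite ∧ (∀ r ∈ R, pi S r = 1) ∧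
          ∃ C : ℝ, ∀ w : FreeGroup S, pi S w = 1 →
            ∃ L : List (FreeGroup S × FreeGroup S),
              (L.length : ℝ) ≤ C * (len S w : ℝ) ^ 2 + C ∧
              (∀ p ∈ L, p.2 ∈ R ∨ p.2⁻¹ ∈ R) ∧
              w = (L.map fun p => p.1 * p.2 * p.1⁻¹).prod := by
  obtain ⟨N, hN, hnN⟩ : ∃ N : ℤ, 2 ≤ |N| ∧ n ∣ N :=
    ⟨2 * n, by rw [abs_mul, abs_two]; linarith [Int.one_le_abs hn], dvd_mul_left n 2⟩
  obtain ⟨M, hM⟩ : ∃ M, M = N ^ 2 + 1 := ⟨_, rfl⟩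
  have hMN : M * N ≠ 0 := mul_ne_zero (by rw [hM]; positivity) (by rintro rfl; simp at hN)
  choose g hg using fun b => isUnit_intCast_of_dvd hMN (vecCons_dvd_mul (hnN.mul_left M) b)
  have hg' (b : Fin 3) : ((g b : intAway (M * N)) : ℚ) = (![N, M, n] b : ℤ) := by simp [hg]
  have g_two : (freeAbelianCharacter g (.of (.of 2)) : intAway (M * N)) = n := by
    simp [freeAbelianCharacter, hg]
  refine ⟨_, inferInstance, BS.toAffineGroup g_two,
    BS.toAffineGroup_injective g_two (not_isOfFinOrder_of 2), semidirectProduct_commutator_mul_comm,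
    (isContractingFamily_intAwayBall hN hM (hnN.mul_left M) hg').hasQuadraticIsoperimetry
      (exists_eq_freeAbelianCharacter_smul hMN hg')⟩
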